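/- On a ball: let (α, ψ) be a classical solution of (P)_λ on Ω = B_R(0) with λ > 0 and α > 0, and let φ ∈ C²(B̄_R(0)), φ = 0 on ∂B_R(0), φ not identically zero, satisfy −Δφ = λp ρ_λ^{1/q} [φ]_λ in B_R(0) (i.e., φ is an eigenfunction of the linearized operator with zero eigenvalue). Then: (i) ∫_{B_R(0)} ρ_λ^{1/q} φ ≠ 0; (ii) the zero eigenvalue is simple: any two such eigenfunctions are linearly dependent. -/

import Mathlib

/-!
Put `u = α + λψ`. By the maximum principle `u ≥ α > 0`, so `u` is a positive classical solution of
`-Δu = λ u^p`, constant on the sphere, and it is radial by the method of moving planes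
(`moving_planes`, `solution_facts`). Consequently, for every unit vector `e`, the function
`-∂ₑu = ⟨e, x⟩ G(‖x‖²)` solves the linearized equation `-Δv = q v` with `q = λp u^{p-1}`, and
integrating the radial equation for `u` shows that `G` lies between two positive constants
(`exists_linearized_solution`).

Let `φ` be an eigenfunction with vanishing weighted mean. It then solves `-Δφ = q φ`. For each `e`,
the part of `φ` that is odd under the reflection in the hyperplane orthogonal to `e` solves the same
equation and vanishes on the boundary of the half ball `⟨e, x⟩ > 0`. Comparing it with `-∂ₑu`, which
is positive on the spherical part of that boundary, shows that it vanishes (`nonpos_of_comparison`);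
thus `φ` is radial (`eigenfunction_radial`). The divergence theorem, in the form
`r^{N-1} φ'(r) = -∫₀^r s^{N-1} q φ ds`, turns the vanishing mean into `φ'(R) = 0`. Together with
`φ(R) = 0` this gives zero Cauchy data, hence `φ = 0` (`radial_eq_zero`), a contradiction. This is
claim (i), `eigenfunction_mean_ne_zero`.

For (ii), some nontrivial combination of two eigenfunctions has zero weighted mean. If it were not
identically zero it would be an eigenfunction contradicting (i).
-/

open MeasureTheory Set Filter

noncomputable section

abbrev Euc (N : ℕ) := EuclideanSpace ℝ (Fin N)

/-- The Laplacian as the sum of second partial derivatives. -/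
def lap {N : ℕ} (f : Euc N → ℝ) (x : Euc N) : ℝ :=
  ∑ i : Fin N,
    fderiv ℝ (fun y => fderiv ℝ f y (EuclideanSpace.single i 1)) x (EuclideanSpace.single i 1)

/-- A bounded domain of class `C³`, described by a `C³` defining function. -/
def IsC3Domain {N : ℕ} (Ω : Set (Euc N)) : Prop :=
  IsOpen Ω ∧ IsConnected Ω ∧ Bornology.IsBounded Ω ∧
    ∃ F : Euc N → ℝ, ContDiff ℝ 3 F ∧ Ω = {x | F x < 0} ∧
      ∀ x ∈ frontier Ω, fderiv ℝ F x ≠ 0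

/-- `ρ_λ = [α+λψ]₊^p`. -/
def rho {N : ℕ} (p lam α : ℝ) (ψ : Euc N → ℝ) (x : Euc N) : ℝ :=
  (max (α + lam * ψ x) 0) ^ p

/-- `ρ_λ^{1/q} = [α+λψ]₊^{p-1}`. -/
def rhoq {N : ℕ} (p lam α : ℝ) (ψ : Euc N → ℝ) (x : Euc N) : ℝ :=
  (max (α + lam * ψ x) 0) ^ (p - 1)

/-- `(α, ψ)` is a classical solution of the constrained problem `(P)_λ` on `Ω`. -/
def SolP {N : ℕ} (Ω : Set (Euc N)) (p lam α : ℝ) (ψ : Euc N → ℝ) : Prop :=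
  ContinuousOn ψ (closure Ω) ∧ ContDiffOn ℝ 2 ψ Ω ∧
    (∀ x ∈ frontier Ω, ψ x = 0) ∧
    (∀ x ∈ Ω, -lap ψ x = rho p lam α ψ x) ∧
    ∫ x in Ω, rho p lam α ψ x = 1

/-- The weighted average `⟨φ⟩_λ`. -/
def avgl {N : ℕ} (Ω : Set (Euc N)) (p lam α : ℝ) (ψ φ : Euc N → ℝ) : ℝ :=
  (∫ x in Ω, rhoq p lam α ψ x * φ x) / ∫ x in Ω, rhoq p lam α ψ x

/-- `[φ]_λ = φ - ⟨φ⟩_λ`. -/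
def brk {N : ℕ} (Ω : Set (Euc N)) (p lam α : ℝ) (ψ φ : Euc N → ℝ) (x : Euc N) : ℝ :=
  φ x - avgl Ω p lam α ψ φ

/-- `φ ∈ C_c^∞(Ω)`. -/
def TestFun {N : ℕ} (Ω : Set (Euc N)) (φ : Euc N → ℝ) : Prop :=
  ContDiff ℝ (⊤ : ℕ∞) φ ∧ HasCompactSupport φ ∧ tsupport φ ⊆ Ω

/-- `∫_Ω ρ_λ^{1/q} [φ]_λ²`. -/
def wdenom {N : ℕ} (Ω : Set (Euc N)) (p lam α : ℝ) (ψ φ : Euc N → ℝ) : ℝ :=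
  ∫ x in Ω, rhoq p lam α ψ x * brk Ω p lam α ψ φ x ^ 2

/-- The Rayleigh-type quotient for the linearized problem. -/
def rayleigh {N : ℕ} (Ω : Set (Euc N)) (p lam α : ℝ) (ψ φ : Euc N → ℝ) : ℝ :=
  ((∫ x in Ω, ‖fderiv ℝ φ x‖ ^ 2) - lam * p * wdenom Ω p lam α ψ φ) / wdenom Ω p lam α ψ φ

/-- The weighted first eigenvalue `σ₁(α,ψ)`. -/
def sigma1 {N : ℕ} (Ω : Set (Euc N)) (p lam α : ℝ) (ψ : Euc N → ℝ) : ℝ :=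
  sInf {s | ∃ φ : Euc N → ℝ, TestFun Ω φ ∧ 0 < wdenom Ω p lam α ψ φ ∧
    s = rayleigh Ω p lam α ψ φ}

/-- The stability threshold `λ*(Ω,p)`. -/
def lamStar {N : ℕ} (Ω : Set (Euc N)) (p : ℝ) : ℝ :=
  sSup {lb : ℝ | 0 < lb ∧ ∀ lam α ψ, 0 ≤ lam → lam < lb → SolP Ω p lam α ψ →
    0 < sigma1 Ω p lam α ψ}

/-- The positivity threshold `λ₊(Ω,p)`. -/
def lamPlusD {N : ℕ} (Ω : Set (Euc N)) (p : ℝ) : ℝ :=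
  sSup {d : ℝ | 0 < d ∧ ∀ lam α ψ, 0 ≤ lam → lam < d → SolP Ω p lam α ψ → 0 < α}

/-- The Sobolev-type constant `Λ(Ω,t)`. -/
def LambdaC {N : ℕ} (Ω : Set (Euc N)) (t : ℝ) : ℝ :=
  sInf {s : ℝ | ∃ w : Euc N → ℝ, TestFun Ω w ∧ w ≠ 0 ∧
    s = (∫ x in Ω, ‖fderiv ℝ w x‖ ^ 2) / (∫ x in Ω, |w x| ^ t) ^ (2 / t)}

/-- `φ` is a (nontrivial) eigenfunction of the linearized operator with zero
eigenvalue on the ball `B_R(0)`: `φ ∈ C²(B̄_R)`, `φ = 0` on `∂B_R`, `φ` not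
identically zero, and `-Δφ = λp ρ_λ^{1/q} [φ]_λ` in `B_R`. -/
def EigZero {N : ℕ} (R p lam α : ℝ) (ψ φ : Euc N → ℝ) : Prop :=
  ContDiffOn ℝ 2 φ (Metric.closedBall (0 : Euc N) R) ∧
    (∀ x ∈ Metric.sphere (0 : Euc N) R, φ x = 0) ∧
    (¬ ∀ x ∈ Metric.closedBall (0 : Euc N) R, φ x = 0) ∧
    ∀ x ∈ Metric.ball (0 : Euc N) R,
      -lap φ x = lam * p *
        (rhoq p lam α ψ x * brk (Metric.ball (0 : Euc N) R) p lam α ψ φ x)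

/-! ### The Laplacian along lines -/

section LaplacianCalculus

variable {N : ℕ}

lemma hasDerivAt_line {f : Euc N → ℝ} {x v : Euc N} {t : ℝ}
    (hf : DifferentiableAt ℝ f (x + t • v)) :
    HasDerivAt (fun t : ℝ => f (x + t • v)) (fderiv ℝ f (x + t • v) v) t := by
  have h1 : HasDerivAt (fun t : ℝ => x + t • v) v t := by
    simpa using ((hasDerivAt_id t).smul_const v).const_add x
  exact hf.hasFDerivAt.comp_hasDerivAt t h1

lemma eventually_differentiableAt {f : Euc N → ℝ} {x : Euc N} (hf : ContDiffAt ℝ 2 f x) :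
    ∀ᶠ y in nhds x, DifferentiableAt ℝ f y := by
  filter_upwards [hf.eventually (by simp)] with y hy
  exact hy.differentiableAt (by simp)

lemma tendsto_line (x v : Euc N) : Tendsto (fun t : ℝ => x + t • v) (nhds 0) (nhds x) := by
  have : Continuous (fun t : ℝ => x + t • v) := by fun_prop
  simpa using this.tendsto 0

/-- The second derivative along a line is the diagonal value of the Hessian. -/
lemma deriv_deriv_line {f : Euc N → ℝ} {x : Euc N} (hf : ContDiffAt ℝ 2 f x) (v : Euc N) :
    HasDerivAt (deriv (fun t : ℝ => f (x + t • v))) (fderiv ℝ (fderiv ℝ f) x v v) 0 := by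
  have h1 : (deriv (fun t : ℝ => f (x + t • v))) =ᶠ[nhds 0]
      fun t => fderiv ℝ f (x + t • v) v := by
    filter_upwards [(tendsto_line x v).eventually (eventually_differentiableAt hf)] with t ht
    exact (hasDerivAt_line ht).deriv
  have h2 : DifferentiableAt ℝ (fderiv ℝ f) x :=
    (hf.fderiv_right (m := 1) (by norm_num)).differentiableAt (by simp)
  have h3 : HasDerivAt (fun t : ℝ => x + t • v) v 0 := by
    simpa using ((hasDerivAt_id (0:ℝ)).smul_const v).const_add x
  have h4 : HasDerivAt (fun t : ℝ => fderiv ℝ f (x + t • v)) (fderiv ℝ (fderiv ℝ f) x v) 0 := by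
    have h2' : HasFDerivAt (fderiv ℝ f) (fderiv ℝ (fderiv ℝ f) x) (x + (0:ℝ) • v) := by
      simpa using h2.hasFDerivAt
    exact h2'.comp_hasDerivAt 0 h3
  have h5 : HasDerivAt (fun t : ℝ => fderiv ℝ f (x + t • v) v)
      (fderiv ℝ (fderiv ℝ f) x v v) 0 := by
    simpa using h4.clm_apply (hasDerivAt_const (0:ℝ) v)
  exact h5.congr_of_eventuallyEq h1

lemma contDiff_inner_left (a : Euc N) : ContDiff ℝ 2 (fun y : Euc N => inner ℝ a y) :=
  (innerSL ℝ a).contDiff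

lemma lap_eq_sum {f : Euc N → ℝ} {x : Euc N} (hf : ContDiffAt ℝ 2 f x) :
    lap f x = ∑ i : Fin N, fderiv ℝ (fderiv ℝ f) x (EuclideanSpace.single i 1)
      (EuclideanSpace.single i 1) := by
  unfold lap
  refine Finset.sum_congr rfl fun i _ => ?_
  have h2 : DifferentiableAt ℝ (fderiv ℝ f) x :=
    (hf.fderiv_right (m := 1) (by norm_num)).differentiableAt (by simp)
  rw [fderiv_clm_apply h2 (by fun_prop)]
  simp

/-- The Laplacian is the trace of the Hessian in any orthonormal basis. -/
lemma lap_eq_sum_basis {f : Euc N → ℝ} {x : Euc N} (hf : ContDiffAt ℝ 2 f x)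
    (b : OrthonormalBasis (Fin N) ℝ (Euc N)) :
    lap f x = ∑ i : Fin N, fderiv ℝ (fderiv ℝ f) x (b i) (b i) := by
  have h1 := congrFun (InnerProductSpace.laplacian_eq_iteratedFDeriv_orthonormalBasis f b) x
  have h2 := congrFun (InnerProductSpace.laplacian_eq_iteratedFDeriv_orthonormalBasis f
    (EuclideanSpace.basisFun (Fin N) ℝ)) x
  rw [h1] at h2
  simp only [iteratedFDeriv_two_apply, EuclideanSpace.basisFun_apply] at h2
  rw [lap_eq_sum hf]
  simpa using h2.symm

lemma lap_eq_sum_lines {f : Euc N → ℝ} {x : Euc N} (hf : ContDiffAt ℝ 2 f x)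
    (b : OrthonormalBasis (Fin N) ℝ (Euc N)) :
    lap f x = ∑ i : Fin N, deriv (deriv (fun t : ℝ => f (x + t • b i))) 0 := by
  rw [lap_eq_sum_basis hf b]
  exact Finset.sum_congr rfl fun i _ => ((deriv_deriv_line hf (b i)).deriv).symm

lemma lap_congr {f g : Euc N → ℝ} {x : Euc N} (h : f =ᶠ[nhds x] g) : lap f x = lap g x := by
  unfold lap
  refine Finset.sum_congr rfl fun i _ => ?_
  have : (fun y => fderiv ℝ f y (EuclideanSpace.single i 1)) =ᶠ[nhds x]
      fun y => fderiv ℝ g y (EuclideanSpace.single i 1) := by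
    filter_upwards [h.fderiv (𝕜 := ℝ)] with y hy
    rw [hy]
  rw [this.fderiv_eq]

lemma lap_lincomb {f g : Euc N → ℝ} {x : Euc N} (hf : ContDiffAt ℝ 2 f x)
    (hg : ContDiffAt ℝ 2 g x) (a b : ℝ) :
    lap (fun y => a * f y + b * g y) x = a * lap f x + b * lap g x := by
  have hfg : ContDiffAt ℝ 2 (fun y => a * f y + b * g y) x :=
    (contDiffAt_const.mul hf).add (contDiffAt_const.mul hg)
  have h1 : fderiv ℝ (fun y => a * f y + b * g y) =ᶠ[nhds x]
      fun y => a • fderiv ℝ f y + b • fderiv ℝ g y := by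
    filter_upwards [eventually_differentiableAt hf, eventually_differentiableAt hg] with y h1 h2
    exact ((h1.hasFDerivAt.const_mul a).add (h2.hasFDerivAt.const_mul b)).fderiv
  have h2 : DifferentiableAt ℝ (fderiv ℝ f) x :=
    (hf.fderiv_right (m := 1) (by norm_num)).differentiableAt (by simp)
  have h3 : DifferentiableAt ℝ (fderiv ℝ g) x :=
    (hg.fderiv_right (m := 1) (by norm_num)).differentiableAt (by simp)
  have h4 : fderiv ℝ (fderiv ℝ (fun y => a * f y + b * g y)) x =
      a • fderiv ℝ (fderiv ℝ f) x + b • fderiv ℝ (fderiv ℝ g) x := by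
    rw [h1.fderiv_eq]
    exact (HasFDerivAt.add (h2.hasFDerivAt.const_smul a) (h3.hasFDerivAt.const_smul b)).fderiv
  rw [lap_eq_sum hfg, lap_eq_sum hf, lap_eq_sum hg, h4]
  simp only [add_apply, smul_apply, smul_eq_mul, Finset.sum_add_distrib, Finset.mul_sum]

lemma lap_sub {f g : Euc N → ℝ} {x : Euc N} (hf : ContDiffAt ℝ 2 f x)
    (hg : ContDiffAt ℝ 2 g x) :
    lap (fun y => f y - g y) x = lap f x - lap g x := by
  have := lap_lincomb hf hg 1 (-1 : ℝ)
  simpa [sub_eq_add_neg] using this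

/-- The Laplacian commutes with affine isometries. -/
lemma lap_comp_isometry {f : Euc N → ℝ} (L : Euc N ≃ₗᵢ[ℝ] Euc N) (z x : Euc N)
    (hf : ContDiffAt ℝ 2 f (L x + z)) :
    lap (fun y => f (L y + z)) x = lap f (L x + z) := by
  have hc : ContDiffAt ℝ 2 (fun y => f (L y + z)) x := by
    have : ContDiffAt ℝ 2 (fun y => L y + z) x :=
      (L.contDiff.contDiffAt).add contDiffAt_const
    exact ContDiffAt.comp x hf this
  rw [lap_eq_sum_lines hc (EuclideanSpace.basisFun (Fin N) ℝ),
    lap_eq_sum_lines hf ((EuclideanSpace.basisFun (Fin N) ℝ).map L)]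
  refine Finset.sum_congr rfl fun i _ => ?_
  congr 2
  funext t
  simp only [map_add, map_smul, OrthonormalBasis.map_apply]
  congr 1
  abel

/-- Laplacian of an affine function times a radial function, with the radial profile
written in the variable `s = ‖x‖²`. -/
lemma lap_affine_mul_radial {K : ℝ → ℝ} (a x : Euc N) (c : ℝ)
    (hK : ContDiffAt ℝ 2 K (‖x‖ ^ 2)) :
    lap (fun y => (c + inner ℝ a y) * K (‖y‖ ^ 2)) x =
      4 * inner ℝ a x * deriv K (‖x‖ ^ 2) + (c + inner ℝ a x) *
        (4 * ‖x‖ ^ 2 * deriv (deriv K) (‖x‖ ^ 2) + 2 * N * deriv K (‖x‖ ^ 2)) := by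
  have hc : ContDiffAt ℝ 2 (fun y : Euc N => (c + inner ℝ a y) * K (‖y‖ ^ 2)) x := by
    have h1 : ContDiffAt ℝ 2 (fun y : Euc N => ‖y‖ ^ 2) x := (contDiff_norm_sq ℝ).contDiffAt
    have h2 : ContDiffAt ℝ 2 (fun y : Euc N => c + inner ℝ a y) x :=
      contDiffAt_const.add (contDiff_inner_left a).contDiffAt
    exact h2.mul (ContDiffAt.comp x hK h1)
  have hKd : ∀ᶠ s in nhds (‖x‖ ^ 2), DifferentiableAt ℝ K s := by
    filter_upwards [hK.eventually (by simp)] with y hy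
    exact hy.differentiableAt (by simp)
  have hK2 : DifferentiableAt ℝ (deriv K) (‖x‖ ^ 2) := by
    exact (hK.derivWithin (m := 1) (by norm_num)).differentiableAt (by simp)
  have key : ∀ v : Euc N, ‖v‖ = 1 →
      deriv (deriv (fun t : ℝ => (c + inner ℝ a (x + t • v)) * K (‖x + t • v‖ ^ 2))) 0 =
      4 * inner ℝ a v * inner ℝ x v * deriv K (‖x‖ ^ 2) + (c + inner ℝ a x) *
        (4 * inner ℝ x v ^ 2 * deriv (deriv K) (‖x‖ ^ 2) + 2 * deriv K (‖x‖ ^ 2)) := by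
    intro v hv
    have hn : ∀ t : ℝ, ‖x + t • v‖ ^ 2 = ‖x‖ ^ 2 + 2 * t * inner ℝ x v + t ^ 2 := by
      intro t
      rw [norm_add_sq_real, norm_smul, inner_smul_right, hv]
      simp
      ring
    have hi : ∀ t : ℝ, inner ℝ a (x + t • v) = inner ℝ a x + t * inner ℝ a v := by
      intro t
      rw [inner_add_right, inner_smul_right]
    simp only [hn, hi]
    set σ : ℝ → ℝ := fun t => ‖x‖ ^ 2 + 2 * t * inner ℝ x v + t ^ 2 with hσ
    have hσd : ∀ t, HasDerivAt σ (2 * inner ℝ x v + 2 * t) t := by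
      intro t
      have h1 : HasDerivAt (fun t : ℝ => 2 * t * inner ℝ x v) (2 * inner ℝ x v) t := by
        simpa using ((hasDerivAt_id t).const_mul 2).mul_const (inner ℝ x v)
      have h2 := (h1.const_add (‖x‖ ^ 2)).add (hasDerivAt_pow 2 t)
      refine h2.congr_deriv ?_
      norm_num
    have hσ0 : σ 0 = ‖x‖ ^ 2 := by simp [hσ]
    have hσc : Tendsto σ (nhds 0) (nhds (‖x‖ ^ 2)) := by
      have := (hσd 0).continuousAt.tendsto
      rwa [hσ0] at this
    have hl : ∀ t, HasDerivAt (fun t : ℝ => c + (inner ℝ a x + t * inner ℝ a v))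
        (inner ℝ a v) t := by
      intro t
      simpa using (((hasDerivAt_id t).mul_const (inner ℝ a v)).const_add (inner ℝ a x)).const_add c
    have e1 : deriv (fun t : ℝ => (c + (inner ℝ a x + t * inner ℝ a v)) * K (σ t)) =ᶠ[nhds 0]
        fun t => inner ℝ a v * K (σ t) + (c + (inner ℝ a x + t * inner ℝ a v)) *
          (deriv K (σ t) * (2 * inner ℝ x v + 2 * t)) := by
      filter_upwards [hσc.eventually hKd] with t ht
      exact ((hl t).mul (ht.hasDerivAt.comp t (hσd t))).deriv
    rw [e1.deriv_eq]
    have hK0 : HasDerivAt (fun t => K (σ t)) (deriv K (‖x‖ ^ 2) * (2 * inner ℝ x v + 2 * 0)) 0 := by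
      have h : HasDerivAt K (deriv K (‖x‖ ^ 2)) (σ 0) := by
        rw [hσ0]; exact hKd.self_of_nhds.hasDerivAt
      exact h.comp 0 (hσd 0)
    have hK1 : HasDerivAt (fun t => deriv K (σ t))
        (deriv (deriv K) (‖x‖ ^ 2) * (2 * inner ℝ x v + 2 * 0)) 0 := by
      have h : HasDerivAt (deriv K) (deriv (deriv K) (‖x‖ ^ 2)) (σ 0) := by
        rw [hσ0]; exact hK2.hasDerivAt
      exact h.comp 0 (hσd 0)
    have hlin : HasDerivAt (fun t : ℝ => 2 * inner ℝ x v + 2 * t) 2 0 := by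
      simpa using ((hasDerivAt_id (0:ℝ)).const_mul 2).const_add (2 * inner ℝ x v)
    have := (hK0.const_mul (inner ℝ a v)).add ((hl 0).mul (hK1.mul hlin))
    refine this.deriv.trans ?_
    simp only [Pi.mul_apply, hσ0]
    ring
  rw [lap_eq_sum_lines hc (EuclideanSpace.basisFun (Fin N) ℝ)]
  rw [Finset.sum_congr rfl fun i _ => key _ ((EuclideanSpace.basisFun (Fin N) ℝ).norm_eq_one i)]
  rw [Finset.sum_add_distrib, ← Finset.mul_sum, Finset.sum_add_distrib]
  have s1 : ∑ i, inner ℝ x (EuclideanSpace.basisFun (Fin N) ℝ i) ^ 2 = ‖x‖ ^ 2 := by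
    have := (EuclideanSpace.basisFun (Fin N) ℝ).sum_sq_norm_inner_left x
    simpa using this
  have s2 : ∑ i, inner ℝ a (EuclideanSpace.basisFun (Fin N) ℝ i) *
      inner ℝ x (EuclideanSpace.basisFun (Fin N) ℝ i) = inner ℝ a x := by
    have := (EuclideanSpace.basisFun (Fin N) ℝ).sum_inner_mul_inner a x
    rw [← this]
    exact Finset.sum_congr rfl fun i _ => by rw [real_inner_comm x]
  rw [← s1, ← s2]
  simp only [Finset.sum_const, Finset.card_univ, Fintype.card_fin, nsmul_eq_mul, Finset.mul_sum,
    Finset.sum_mul]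
  congr 1
  · exact Finset.sum_congr rfl fun i _ => by ring
  · congr 1
    congr 1
    ring

/-- Laplacian of a concave quadratic polynomial in one direction. -/
lemma lap_slab_quadratic (e x : Euc N) (he : ‖e‖ = 1) (A l r : ℝ) :
    lap (fun y => A * ((inner ℝ e y - l) * (r - inner ℝ e y))) x = -(2 * A) := by
  have hc : ContDiffAt ℝ 2 (fun y : Euc N => A * ((inner ℝ e y - l) * (r - inner ℝ e y))) x := by
    have h := (contDiff_inner_left e).contDiffAt (x := x)
    exact contDiffAt_const.mul ((h.sub contDiffAt_const).mul (contDiffAt_const.sub h))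
  have key : ∀ v : Euc N, deriv (deriv (fun t : ℝ =>
      A * ((inner ℝ e (x + t • v) - l) * (r - inner ℝ e (x + t • v))))) 0 =
      -(2 * A) * inner ℝ e v ^ 2 := by
    intro v
    have hi : ∀ t : ℝ, inner ℝ e (x + t • v) = inner ℝ e x + t * inner ℝ e v := by
      intro t
      rw [inner_add_right, inner_smul_right]
    simp only [hi]
    have hl : ∀ t, HasDerivAt (fun t : ℝ => inner ℝ e x + t * inner ℝ e v)
        (inner ℝ e v) t := by
      intro t
      simpa using (((hasDerivAt_id t).mul_const (inner ℝ e v)).const_add (inner ℝ e x))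
    have e1 : deriv (fun t : ℝ => A * ((inner ℝ e x + t * inner ℝ e v - l) *
        (r - (inner ℝ e x + t * inner ℝ e v)))) =
        fun t => A * (inner ℝ e v * (r - (inner ℝ e x + t * inner ℝ e v)) +
          (inner ℝ e x + t * inner ℝ e v - l) * (-inner ℝ e v)) := by
      funext t
      exact ((((hl t).sub_const l).mul ((hl t).const_sub r)).const_mul A).deriv
    rw [e1]
    have := (((((hl 0).const_sub r).const_mul (inner ℝ e v))).add
      (((hl 0).sub_const l).mul_const (-inner ℝ e v))).const_mul A
    refine this.deriv.trans ?_
    ring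
  rw [lap_eq_sum_lines hc (EuclideanSpace.basisFun (Fin N) ℝ)]
  rw [Finset.sum_congr rfl fun i _ => key _]
  have s1 : ∑ i, inner ℝ e (EuclideanSpace.basisFun (Fin N) ℝ i) ^ 2 = ‖e‖ ^ 2 := by
    have := (EuclideanSpace.basisFun (Fin N) ℝ).sum_sq_norm_inner_left e
    simpa using this
  rw [← Finset.mul_sum, s1, he]
  ring

end LaplacianCalculus

/-! ### The weak maximum principle -/

section MaximumPrinciple

variable {N : ℕ}

/-- At an interior local minimum the Laplacian of a `C²` function is nonnegative. -/
lemma lap_nonneg_of_isLocalMin {f : Euc N → ℝ} {x : Euc N} (hf : ContDiffAt ℝ 2 f x)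
    (hm : IsLocalMin f x) : 0 ≤ lap f x := by
  rw [lap_eq_sum_lines hf (EuclideanSpace.basisFun (Fin N) ℝ)]
  refine Finset.sum_nonneg fun i _ => ?_
  set v := EuclideanSpace.basisFun (Fin N) ℝ i
  by_contra! hneg
  set g : ℝ → ℝ := fun t => f (x + t • v) with hg
  have hgm : IsLocalMin g 0 := by
    have := (tendsto_line x v).eventually hm
    filter_upwards [this] with t ht
    simpa [hg] using ht
  have hd : deriv g 0 = 0 := hgm.deriv_eq_zero
  have hcont : ContinuousAt g 0 := by
    have : DifferentiableAt ℝ f (x + (0:ℝ) • v) := by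
      simpa using hf.differentiableAt (by simp)
    exact (hasDerivAt_line this).continuousAt
  have hgM : IsLocalMax g 0 := isLocalMax_of_deriv_deriv_neg hneg hd hcont
  have hconst : g =ᶠ[nhds 0] fun _ => g 0 := by
    filter_upwards [hgm, hgM] with t h1 h2
    exact le_antisymm h2 h1
  have h2 : deriv (deriv g) 0 = 0 := by
    have := hconst.deriv.deriv_eq
    simpa using this
  linarith

/-- Weak minimum principle. The boundary condition is expressed through a continuous
minorant `b`, so that `w` need not extend continuously to the boundary. -/
lemma weak_min_principle {D : Set (Euc N)} {R : ℝ} (hD : IsOpen D)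
    (hDR : D ⊆ Metric.ball 0 R) {w b : Euc N → ℝ} (hN : 0 < N)
    (hw : ∀ x ∈ D, ContDiffAt ℝ 2 w x) (hb : ContinuousOn b (closure D))
    (hbw : ∀ x ∈ D, b x ≤ w x) (hb0 : ∀ x ∈ frontier D, 0 ≤ b x)
    (hlap : ∀ x ∈ D, lap w x ≤ 0) : ∀ x ∈ D, 0 ≤ w x := by
  intro x₀ hx₀
  by_contra! hneg
  have hRpos : 0 < R := by
    have := hDR hx₀
    rw [mem_ball_zero_iff] at this
    exact (norm_nonneg _).trans_lt this
  obtain ⟨ε, hε, hεx⟩ : ∃ ε > 0, w x₀ + ε * R ^ 2 < 0 := by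
    refine ⟨-w x₀ / (2 * R ^ 2), by apply div_pos <;> [linarith; positivity], ?_⟩
    have : -w x₀ / (2 * R ^ 2) * R ^ 2 = -w x₀ / 2 := by field_simp
    rw [this]; linarith
  set z : Euc N → ℝ := fun y => 1 * w y + ε * ((1 + inner ℝ (0 : Euc N) y) * (R ^ 2 - ‖y‖ ^ 2))
    with hz
  have hquad : ∀ x : Euc N, ContDiffAt ℝ 2
      (fun y : Euc N => (1 + inner ℝ (0 : Euc N) y) * (R ^ 2 - ‖y‖ ^ 2)) x := by
    intro x
    have h1 : ContDiffAt ℝ 2 (fun y : Euc N => ‖y‖ ^ 2) x := (contDiff_norm_sq ℝ).contDiffAt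
    exact (contDiffAt_const.add (contDiff_inner_left 0).contDiffAt).mul (contDiffAt_const.sub h1)
  have hzlap : ∀ x ∈ D, lap z x < 0 := by
    intro x hx
    rw [hz, lap_lincomb (hw x hx) (hquad x)]
    have := lap_affine_mul_radial (K := fun s => R ^ 2 - s) (0 : Euc N) x 1 (by fun_prop)
    have hd : deriv (fun s : ℝ => R ^ 2 - s) = fun _ => -1 := by
      funext s; simp
    simp only [hd] at this
    rw [this]
    have hNp : (0:ℝ) < N := by exact_mod_cast hN
    have := hlap x hx
    simp only [inner_zero_left, deriv_const]
    nlinarith [mul_pos hε hNp]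
  have hzw : ∀ x ∈ D, w x ≤ z x := by
    intro x hx
    have h1 := hDR hx
    rw [mem_ball_zero_iff] at h1
    have : ‖x‖ ^ 2 ≤ R ^ 2 := by gcongr
    simp only [hz, inner_zero_left, add_zero, one_mul]
    nlinarith
  have hz0 : z x₀ < 0 := by
    have : z x₀ ≤ w x₀ + ε * R ^ 2 := by
      simp only [hz, inner_zero_left, add_zero, one_mul]
      nlinarith [mul_nonneg hε.le (sq_nonneg ‖x₀‖)]
    linarith
  -- the minimum of `z` is attained on the compact sublevel set of the minorant `b`
  set S : Set (Euc N) := closure D ∩ b ⁻¹' Iic (z x₀) with hS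
  have hSc : IsCompact S := by
    have hbd : Bornology.IsBounded D := Metric.isBounded_ball.subset hDR
    have : IsCompact (closure D) := hbd.isCompact_closure
    exact this.of_isClosed_subset (hb.preimage_isClosed_of_isClosed isClosed_closure isClosed_Iic)
      inter_subset_left
  have hSD : S ⊆ D := by
    rintro y ⟨hy1, hy2⟩
    by_contra hyD
    have : y ∈ frontier D := by
      rw [frontier, hD.interior_eq]; exact ⟨hy1, hyD⟩
    have := hb0 y this
    simp only [mem_preimage, mem_Iic] at hy2
    linarith
  have hx₀S : x₀ ∈ S := ⟨subset_closure hx₀, (hbw x₀ hx₀).trans (hzw x₀ hx₀)⟩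
  have hzC : ∀ x ∈ D, ContDiffAt ℝ 2 z x := fun x hx =>
    (contDiffAt_const.mul (hw x hx)).add (contDiffAt_const.mul (hquad x))
  obtain ⟨x₁, hx₁, hmin⟩ := hSc.exists_isMinOn ⟨x₀, hx₀S⟩
    (fun x hx => (hzC x (hSD hx)).continuousAt.continuousWithinAt)
  have hloc : IsLocalMin z x₁ := by
    filter_upwards [hD.mem_nhds (hSD hx₁)] with y hy
    by_cases hyS : y ∈ S
    · exact hmin hyS
    · have h1 : z x₀ < b y := by
        by_contra! h
        exact hyS ⟨subset_closure hy, h⟩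
      have h2 : z x₁ ≤ z x₀ := hmin hx₀S
      linarith [hbw y hy, hzw y hy]
  have := lap_nonneg_of_isLocalMin (hzC x₁ (hSD hx₁)) hloc
  linarith [hzlap x₁ (hSD hx₁)]

/-- The part of the ball of radius `R` between the hyperplanes `⟨e, x⟩ = a` and `⟨e, x⟩ = b`. -/
def slab (R : ℝ) (e : Euc N) (a b : ℝ) : Set (Euc N) :=
  {x | ‖x‖ < R ∧ a < inner ℝ e x ∧ inner ℝ e x < b}

/-- The closed counterpart of `slab`. -/
def cslab (R : ℝ) (e : Euc N) (a b : ℝ) : Set (Euc N) :=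
  {x | ‖x‖ ≤ R ∧ a ≤ inner ℝ e x ∧ inner ℝ e x ≤ b}

lemma isOpen_slab (R : ℝ) (e : Euc N) (a b : ℝ) : IsOpen (slab R e a b) := by
  have h1 : Continuous (fun x : Euc N => ‖x‖) := continuous_norm
  have h2 : Continuous (fun x : Euc N => inner ℝ e x) := (contDiff_inner_left e).continuous
  exact (isOpen_lt h1 continuous_const).inter
    ((isOpen_lt continuous_const h2).inter (isOpen_lt h2 continuous_const))

lemma isClosed_cslab (R : ℝ) (e : Euc N) (a b : ℝ) : IsClosed (cslab R e a b) := by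
  have h1 : Continuous (fun x : Euc N => ‖x‖) := continuous_norm
  have h2 : Continuous (fun x : Euc N => inner ℝ e x) := (contDiff_inner_left e).continuous
  exact (isClosed_le h1 continuous_const).inter
    ((isClosed_le continuous_const h2).inter (isClosed_le h2 continuous_const))

lemma slab_subset_cslab (R : ℝ) (e : Euc N) (a b : ℝ) : slab R e a b ⊆ cslab R e a b :=
  fun _ h => ⟨h.1.le, h.2.1.le, h.2.2.le⟩

lemma isCompact_cslab (R : ℝ) (e : Euc N) (a b : ℝ) : IsCompact (cslab R e a b) :=
  (isCompact_closedBall (0 : Euc N) R).of_isClosed_subset (isClosed_cslab R e a b)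
    (fun x hx => by rw [mem_closedBall_zero_iff]; exact hx.1)

/-- The weak minimum principle on a slab. -/
lemma slab_min_principle (hN : 0 < N) {R : ℝ} {e : Euc N} {a b : ℝ} {w β : Euc N → ℝ}
    (hw : ∀ x ∈ slab R e a b, ContDiffAt ℝ 2 w x) (hβ : ContinuousOn β (cslab R e a b))
    (hβw : ∀ x ∈ slab R e a b, β x ≤ w x)
    (hβ0 : ∀ x ∈ cslab R e a b, (‖x‖ = R ∨ inner ℝ e x = a ∨ inner ℝ e x = b) → 0 ≤ β x)
    (hlap : ∀ x ∈ slab R e a b, lap w x ≤ 0) : ∀ x ∈ slab R e a b, 0 ≤ w x := by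
  have hcl : closure (slab R e a b) ⊆ cslab R e a b :=
    closure_minimal (slab_subset_cslab R e a b) (isClosed_cslab R e a b)
  refine weak_min_principle (R := R) (isOpen_slab R e a b)
    (fun x hx => by rw [mem_ball_zero_iff]; exact hx.1) hN hw (hβ.mono hcl) hβw ?_ hlap
  intro x hx
  rw [frontier, (isOpen_slab R e a b).interior_eq] at hx
  have h1 := hcl hx.1
  refine hβ0 x h1 ?_
  by_contra! h
  exact hx.2 ⟨lt_of_le_of_ne h1.1 h.1, lt_of_le_of_ne h1.2.1 h.2.1.symm,
    lt_of_le_of_ne h1.2.2 h.2.2⟩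

/-- Minimum principle for `Δw ≤ K w⁻` on slabs that are narrow relative to `K`: a quadratic barrier
halves any lower bound for `w`, and the halving is iterated. -/
lemma narrow_min_principle (hN : 0 < N) {R : ℝ} {e : Euc N} (he : ‖e‖ = 1) {a b K : ℝ}
    (hK : 0 ≤ K) (hab : K * (b - a) ^ 2 ≤ 4) {w : Euc N → ℝ}
    (hw : ∀ x ∈ slab R e a b, ContDiffAt ℝ 2 w x) (hwc : ContinuousOn w (cslab R e a b))
    (hw0 : ∀ x ∈ cslab R e a b, (‖x‖ = R ∨ inner ℝ e x = a ∨ inner ℝ e x = b) → 0 ≤ w x)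
    (hlap : ∀ x ∈ slab R e a b, lap w x ≤ K * max (-w x) 0) :
    ∀ x ∈ slab R e a b, 0 ≤ w x := by
  have step : ∀ m : ℝ, 0 ≤ m → (∀ x ∈ slab R e a b, -m ≤ w x) →
      ∀ x ∈ slab R e a b, -(m / 2) ≤ w x := by
    intro m hm hwm x hx
    have hq : ∀ y : Euc N, ContDiffAt ℝ 2 (fun y : Euc N =>
        K * m / 2 * ((inner ℝ e y - a) * (b - inner ℝ e y))) y := by
      intro y
      have h := (contDiff_inner_left e).contDiffAt (x := y)
      exact contDiffAt_const.mul ((h.sub contDiffAt_const).mul (contDiffAt_const.sub h))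
    set z : Euc N → ℝ := fun y => 1 * w y +
      1 * (K * m / 2 * ((inner ℝ e y - a) * (b - inner ℝ e y))) with hz
    have hzpos : ∀ x ∈ slab R e a b, 0 ≤ z x := by
      refine slab_min_principle hN (β := z) (fun y hy => ?_) ?_ (fun _ _ => le_rfl) ?_ ?_
      · exact (contDiffAt_const.mul (hw y hy)).add (contDiffAt_const.mul (hq y))
      · exact (continuousOn_const.mul hwc).add (continuousOn_const.mul
          (fun y _ => (hq y).continuousAt.continuousWithinAt))
      · intro y hy hyb
        have h1 := hw0 y hy hyb
        have h2 : 0 ≤ K * m / 2 * ((inner ℝ e y - a) * (b - inner ℝ e y)) := by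
          have := mul_nonneg (sub_nonneg.2 hy.2.1) (sub_nonneg.2 hy.2.2)
          positivity
        simp only [hz]; linarith
      · intro y hy
        rw [hz, lap_lincomb (hw y hy) (hq y), lap_slab_quadratic e y he]
        have h1 := hlap y hy
        have h2 : max (-w y) 0 ≤ m := max_le (by linarith [hwm y hy]) hm
        have := mul_le_mul_of_nonneg_left h2 hK
        linarith
    have h1 := hzpos x hx
    have h2 : (inner ℝ e x - a) * (b - inner ℝ e x) ≤ (b - a) ^ 2 / 4 := by
      nlinarith [sq_nonneg (2 * inner ℝ e x - a - b)]
    have h3 : K * m / 2 * ((inner ℝ e x - a) * (b - inner ℝ e x)) ≤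
        K * m / 2 * ((b - a) ^ 2 / 4) := mul_le_mul_of_nonneg_left h2 (by positivity)
    have h4 : m * (K * (b - a) ^ 2) ≤ m * 4 := mul_le_mul_of_nonneg_left hab hm
    simp only [hz] at h1
    nlinarith
  intro x hx
  obtain ⟨m, hm, hwm⟩ : ∃ m : ℝ, 0 ≤ m ∧ ∀ x ∈ slab R e a b, -m ≤ w x := by
    obtain ⟨C, hC⟩ := (isCompact_cslab R e a b).exists_bound_of_continuousOn hwc
    refine ⟨max C 0, le_max_right _ _, fun y hy => ?_⟩
    have h1 := hC y (slab_subset_cslab R e a b hy)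
    have := neg_abs_le (w y)
    rw [Real.norm_eq_abs] at h1
    linarith [le_max_left C 0]
  have hit : ∀ n : ℕ, ∀ x ∈ slab R e a b, -(m * (1 / 2) ^ n) ≤ w x := by
    intro n
    induction n with
    | zero => simpa using hwm
    | succ n ih =>
      intro y hy
      have := step _ (by positivity) ih y hy
      rw [pow_succ]
      linarith
  have hlim : Tendsto (fun n : ℕ => -(m * (1 / 2 : ℝ) ^ n)) atTop (nhds (-(m * 0))) :=
    ((tendsto_pow_atTop_nhds_zero_of_lt_one (by norm_num) (by norm_num)).const_mul m).neg
  have := le_of_tendsto' hlim (fun n => hit n x hx)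
  simpa using this

end MaximumPrinciple

/-! ### Moving planes -/

section MovingPlanes

variable {N : ℕ}

/-- Reflection in the hyperplane `⟨e, x⟩ = l` (for a unit vector `e`). -/
def planeRefl (e : Euc N) (l : ℝ) (x : Euc N) : Euc N := x + (2 * (l - inner ℝ e x)) • e

lemma planeRefl_eq (e : Euc N) (he : ‖e‖ = 1) (l : ℝ) (x : Euc N) :
    planeRefl e l x = (Submodule.reflection (Submodule.span ℝ {e})ᗮ) x + (2 * l) • e := by
  rw [Submodule.reflection_orthogonal_apply, Submodule.reflection_singleton_apply, he, planeRefl]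
  simp only [map_one, one_pow, div_one, two_smul]
  module

lemma norm_planeRefl_sq (e : Euc N) (he : ‖e‖ = 1) (l : ℝ) (x : Euc N) :
    ‖planeRefl e l x‖ ^ 2 = ‖x‖ ^ 2 + 4 * l * (l - inner ℝ e x) := by
  rw [planeRefl, norm_add_sq_real, inner_smul_right, norm_smul, he, real_inner_comm, mul_one,
    Real.norm_eq_abs, sq_abs]
  ring

lemma planeRefl_self (e : Euc N) (l : ℝ) (x : Euc N) (h : inner ℝ e x = l) : planeRefl e l x = x := by
  simp [planeRefl, h]

lemma inner_planeRefl (e : Euc N) (he : ‖e‖ = 1) (l : ℝ) (x : Euc N) :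
    inner ℝ e (planeRefl e l x) = 2 * l - inner ℝ e x := by
  rw [planeRefl, inner_add_right, inner_smul_right, real_inner_self_eq_norm_sq, he]
  ring

lemma norm_planeRefl_le {e : Euc N} (he : ‖e‖ = 1) {l R : ℝ} (hl : 0 ≤ l) {x : Euc N} (hx : ‖x‖ ≤ R)
    (h : l ≤ inner ℝ e x) : ‖planeRefl e l x‖ ≤ R := by
  have h1 := norm_planeRefl_sq e he l x
  have h2 : ‖planeRefl e l x‖ ≤ ‖x‖ := by
    apply le_of_sq_le_sq _ (norm_nonneg _)
    nlinarith [mul_nonneg hl (sub_nonneg.2 h)]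
  exact h2.trans hx

lemma norm_planeRefl_lt {e : Euc N} (he : ‖e‖ = 1) {l R : ℝ} (hl : 0 ≤ l) {x : Euc N} (hx : ‖x‖ < R)
    (h : l ≤ inner ℝ e x) : ‖planeRefl e l x‖ < R :=
  (norm_planeRefl_le he hl le_rfl h).trans_lt hx

lemma continuous_planeRefl (e : Euc N) (l : ℝ) : Continuous (planeRefl e l) := by
  have h2 : Continuous (fun x : Euc N => inner ℝ e x) := (contDiff_inner_left e).continuous
  unfold planeRefl
  fun_prop

lemma contDiffAt_planeRefl {u : Euc N → ℝ} {e : Euc N} {l : ℝ} {x : Euc N}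
    (hu : ContDiffAt ℝ 2 u (planeRefl e l x)) : ContDiffAt ℝ 2 (fun y => u (planeRefl e l y)) x := by
  have h2 : ContDiffAt ℝ 2 (fun x : Euc N => planeRefl e l x) x := by
    unfold planeRefl
    have h := (contDiff_inner_left e).contDiffAt (x := x)
    exact contDiffAt_id.add ((contDiffAt_const.mul (contDiffAt_const.sub h)).smul contDiffAt_const)
  exact ContDiffAt.comp x hu h2

lemma lap_planeRefl {u : Euc N → ℝ} {e : Euc N} (he : ‖e‖ = 1) {l : ℝ} {x : Euc N}
    (hu : ContDiffAt ℝ 2 u (planeRefl e l x)) :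
    lap (fun y => u (planeRefl e l y)) x = lap u (planeRefl e l x) := by
  simp only [planeRefl_eq e he] at hu ⊢
  exact lap_comp_isometry _ _ _ hu

lemma inner_le_of_norm_le {e x : Euc N} (he : ‖e‖ = 1) {R : ℝ} (hx : ‖x‖ ≤ R) :
    inner ℝ e x ≤ R := by
  have := real_inner_le_norm e x
  rw [he, one_mul] at this
  exact this.trans hx

/-- A solution of `Δu ≤ -m` lies above the torsion-type barrier. -/
lemma torsion_lower_bound (hN : 0 < N) {R : ℝ} {u : Euc N → ℝ} {α m : ℝ}
    (huc : ContinuousOn u (Metric.closedBall 0 R))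
    (hu2 : ∀ x, ‖x‖ < R → ContDiffAt ℝ 2 u x) (hub : ∀ x, ‖x‖ = R → u x = α)
    (hlap : ∀ x, ‖x‖ < R → lap u x ≤ -m) :
    ∀ x, ‖x‖ ≤ R → α + m / (2 * N) * (R ^ 2 - ‖x‖ ^ 2) ≤ u x := by
  intro x hx
  rcases hx.eq_or_lt with h | h
  · rw [hub x h, h]; simp
  have hNp : (0:ℝ) < N := by exact_mod_cast hN
  have hquad : ∀ x : Euc N, ContDiffAt ℝ 2
      (fun y : Euc N => (1 + inner ℝ (0 : Euc N) y) * (α + m / (2 * N) * (R ^ 2 - ‖y‖ ^ 2))) x := by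
    intro x
    have h1 : ContDiffAt ℝ 2 (fun y : Euc N => ‖y‖ ^ 2) x := (contDiff_norm_sq ℝ).contDiffAt
    exact (contDiffAt_const.add (contDiff_inner_left 0).contDiffAt).mul
      (contDiffAt_const.add (contDiffAt_const.mul (contDiffAt_const.sub h1)))
  have hsub : ∀ y ∈ cslab R (0 : Euc N) (-1) 1, y ∈ Metric.closedBall (0 : Euc N) R :=
    fun y hy => by rw [mem_closedBall_zero_iff]; exact hy.1
  -- with `e = 0`, the slab `-1 < ⟨e, x⟩ < 1` is the whole ball
  have key := slab_min_principle hN (R := R) (e := 0) (a := -1) (b := 1)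
    (w := fun y => u y - (1 + inner ℝ (0 : Euc N) y) * (α + m / (2 * N) * (R ^ 2 - ‖y‖ ^ 2)))
    (β := fun y => u y - (1 + inner ℝ (0 : Euc N) y) * (α + m / (2 * N) * (R ^ 2 - ‖y‖ ^ 2)))
    (fun y hy => (hu2 y hy.1).sub (hquad y))
    ((huc.mono hsub).sub fun y _ => (hquad y).continuousAt.continuousWithinAt)
    (fun _ _ => le_rfl) ?_ ?_ x ⟨h, by simp, by simp⟩
  · simp only [inner_zero_left, add_zero, one_mul] at key
    linarith
  · rintro y hy (h1 | h1 | h1)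
    · simp [h1, hub y h1]
    · simp at h1
    · simp at h1
  · intro y hy
    rw [lap_sub (hu2 y hy.1) (hquad y)]
    have := lap_affine_mul_radial (K := fun s => α + m / (2 * N) * (R ^ 2 - s)) (0 : Euc N) y 1
      (by fun_prop)
    have hd : deriv (fun s : ℝ => α + m / (2 * N) * (R ^ 2 - s)) = fun _ => -(m / (2 * N)) := by
      funext s
      have := (((hasDerivAt_id s).const_sub (R ^ 2)).const_mul (m / (2 * N))).const_add α
      simp
    simp only [hd] at this
    rw [this]
    simp only [inner_zero_left, deriv_const]
    have h1 := hlap y hy.1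
    have h2 : 2 * (N:ℝ) * -(m / (2 * N)) = -m := by field_simp
    rw [h2]
    linarith

/-- Moving planes on a ball. The hypotheses on the nonlinearity `f` are monotonicity and a one-sided
Lipschitz bound on the range of `u`. -/
lemma moving_planes (hN : 0 < N) {R : ℝ} (hR : 0 < R) {e : Euc N} (he : ‖e‖ = 1)
    {u : Euc N → ℝ} {f : ℝ → ℝ} {α K c : ℝ}
    (huc : ContinuousOn u (Metric.closedBall 0 R))
    (hu2 : ∀ x, ‖x‖ < R → ContDiffAt ℝ 2 u x) (hub : ∀ x, ‖x‖ = R → u x = α)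
    (hc : 0 < c) (hlow : ∀ x, ‖x‖ ≤ R → α + c * (R ^ 2 - ‖x‖ ^ 2) ≤ u x)
    (hlap : ∀ x, ‖x‖ < R → lap u x = -f (u x))
    (hfm : ∀ x y, ‖x‖ ≤ R → ‖y‖ ≤ R → u x ≤ u y → f (u x) ≤ f (u y)) (hK : 0 < K)
    (hfK : ∀ x y, ‖x‖ ≤ R → ‖y‖ ≤ R → u x ≤ u y → f (u y) - f (u x) ≤ K * (u y - u x)) :
    ∀ x, ‖x‖ ≤ R → 0 ≤ inner ℝ e x → u x ≤ u (planeRefl e 0 x) := by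
  have hcomp : ∀ l, 0 ≤ l → ∀ b, ContinuousOn (fun x => u (planeRefl e l x) - u x)
      (cslab R e l b) := by
    intro l hl b
    refine ContinuousOn.sub (huc.comp (continuous_planeRefl e l).continuousOn ?_) (huc.mono ?_)
    · intro x hx
      rw [mem_closedBall_zero_iff]
      exact norm_planeRefl_le he hl hx.1 hx.2.1
    · intro x hx
      rw [mem_closedBall_zero_iff]
      exact hx.1
  have hC2 : ∀ l, 0 ≤ l → ∀ x, ‖x‖ < R → l ≤ inner ℝ e x →
      ContDiffAt ℝ 2 (fun x => u (planeRefl e l x) - u x) x := by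
    intro l hl x hx hlx
    exact (contDiffAt_planeRefl (hu2 _ (norm_planeRefl_lt he hl hx hlx))).sub (hu2 x hx)
  have hlapw : ∀ l, 0 ≤ l → ∀ x, ‖x‖ < R → l ≤ inner ℝ e x →
      lap (fun x => u (planeRefl e l x) - u x) x = f (u x) - f (u (planeRefl e l x)) := by
    intro l hl x hx hlx
    have h1 := norm_planeRefl_lt he hl hx hlx
    rw [lap_sub (contDiffAt_planeRefl (hu2 _ h1)) (hu2 x hx), lap_planeRefl he (hu2 _ h1), hlap _ h1,
      hlap x hx]
    ring
  -- `P l`: the reflected values dominate on the cap cut off by the hyperplane at height `l`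
  set P : ℝ → Prop := fun l => ∀ x, ‖x‖ ≤ R → l ≤ inner ℝ e x → u x ≤ u (planeRefl e l x) with hP
  -- on the sphere the inequality is free, with a quantitative gain
  have hsphere : ∀ l, 0 ≤ l → ∀ x, ‖x‖ = R → l ≤ inner ℝ e x →
      u x + 4 * c * l * (inner ℝ e x - l) ≤ u (planeRefl e l x) := by
    intro l hl x hx hlx
    have h1 := hlow _ (norm_planeRefl_le he hl hx.le hlx)
    rw [norm_planeRefl_sq e he, hx] at h1
    rw [hub x hx]
    linarith
  have hgain : ∀ l, 0 ≤ l → P l → ∀ x, ‖x‖ ≤ R → l ≤ inner ℝ e x →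
      u x + 4 * c * l * (inner ℝ e x - l) ≤ u (planeRefl e l x) := by
    intro l hl hPl x hx hlx
    rcases hx.eq_or_lt with h | h
    · exact hsphere l hl x h hlx
    rcases hlx.eq_or_lt with h' | h'
    · rw [planeRefl_self e l x h'.symm, ← h']; simp
    have hlin : ∀ y : Euc N, ContDiffAt ℝ 2
        (fun y : Euc N => (-(4 * c * l * l) + inner ℝ ((4 * c * l) • e) y) * 1) y := by
      intro y
      exact (contDiffAt_const.add (contDiff_inner_left _).contDiffAt).mul contDiffAt_const
    have hval : ∀ y : Euc N, (-(4 * c * l * l) + inner ℝ ((4 * c * l) • e) y) * 1 =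
        4 * c * l * (inner ℝ e y - l) := by
      intro y
      rw [inner_smul_left]
      simp
      ring
    have key := slab_min_principle hN (R := R) (e := e) (a := l) (b := R + 1)
      (w := fun y => (u (planeRefl e l y) - u y) -
        (-(4 * c * l * l) + inner ℝ ((4 * c * l) • e) y) * 1)
      (β := fun y => (u (planeRefl e l y) - u y) -
        (-(4 * c * l * l) + inner ℝ ((4 * c * l) • e) y) * 1)
      (fun y hy => (hC2 l hl y hy.1 hy.2.1.le).sub (hlin y))
      ((hcomp l hl (R + 1)).sub fun y _ => (hlin y).continuousAt.continuousWithinAt)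
      (fun _ _ => le_rfl) ?_ ?_ x ⟨h, h', by linarith [inner_le_of_norm_le he hx]⟩
    · simp only [hval] at key
      linarith
    · rintro y hy (h1 | h1 | h1)
      · simp only [hval]
        linarith [hsphere l hl y h1 hy.2.1]
      · simp only [hval, h1, planeRefl_self e l y h1]
        simp
      · linarith [inner_le_of_norm_le he hy.1]
    · intro y hy
      rw [lap_sub (hC2 l hl y hy.1 hy.2.1.le) (hlin y), hlapw l hl y hy.1 hy.2.1.le]
      have := lap_affine_mul_radial (K := fun _ => 1) ((4 * c * l) • e) y (-(4 * c * l * l))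
        (by fun_prop)
      simp only [deriv_const', deriv_const, mul_zero, add_zero] at this
      rw [this]
      have := hfm y _ hy.1.le (norm_planeRefl_le he hl hy.1.le hy.2.1.le) (hPl y hy.1.le hy.2.1.le)
      linarith
  have hdist : ∀ l l' : ℝ, ∀ x, dist (planeRefl e l x) (planeRefl e l' x) = 2 * |l - l'| := by
    intro l l' x
    rw [dist_eq_norm]
    have : planeRefl e l x - planeRefl e l' x = (2 * (l - l')) • e := by
      simp only [planeRefl]; module
    rw [this, norm_smul, he, mul_one, Real.norm_eq_abs, abs_mul, abs_two]
  have hunif : UniformContinuousOn u (Metric.closedBall 0 R) :=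
    (isCompact_closedBall (0 : Euc N) R).uniformContinuousOn_of_continuous huc
  -- the step to the left of a height `l > 0` at which `P l` holds
  have hopen : ∀ l, 0 < l → l ≤ R → P l → ∃ δ > 0, ∀ l', 0 ≤ l' → l' < l → l - δ < l' → P l' := by
    intro l hl hlR hPl
    obtain ⟨d, hd, hdK⟩ : ∃ d > 0, K * d ^ 2 ≤ 4 := by
      refine ⟨2 / Real.sqrt K, by positivity, ?_⟩
      rw [div_pow, Real.sq_sqrt hK.le]
      field_simp
      norm_num
    obtain ⟨δ, hδ, hδu⟩ := Metric.uniformContinuousOn_iff.1 hunif (2 * c * l * d) (by positivity)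
    refine ⟨min (δ / 2) (d / 2), by positivity, ?_⟩
    intro l' hl' hl'l hl'δ
    have hm1 := min_le_left (δ / 2) (d / 2)
    have hm2 := min_le_right (δ / 2) (d / 2)
    have hfar : ∀ x, ‖x‖ ≤ R → l + d / 2 ≤ inner ℝ e x → u x ≤ u (planeRefl e l' x) := by
      intro x hx hlx
      have h1 := hgain l hl.le hPl x hx (by linarith)
      have h2 : dist (planeRefl e l x) (planeRefl e l' x) < δ := by
        rw [hdist, abs_of_pos (by linarith)]
        linarith
      have h3 := hδu (planeRefl e l x)
        (by rw [mem_closedBall_zero_iff]; exact norm_planeRefl_le he hl.le hx (by linarith))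
        (planeRefl e l' x)
        (by rw [mem_closedBall_zero_iff]; exact norm_planeRefl_le he hl' hx (by linarith)) h2
      rw [Real.dist_eq] at h3
      have h4 := (abs_lt.1 h3).2
      have h5 : 4 * c * l * (d / 2) ≤ 4 * c * l * (inner ℝ e x - l) :=
        mul_le_mul_of_nonneg_left (by linarith) (by positivity)
      linarith
    intro x hx hlx
    rcases hx.eq_or_lt with h | h
    · have := hsphere l' hl' x h hlx
      have : 0 ≤ 4 * c * l' * (inner ℝ e x - l') :=
        mul_nonneg (by positivity) (by linarith)
      linarith
    rcases hlx.eq_or_lt with h' | h'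
    · rw [planeRefl_self e l' x h'.symm]
    rcases le_or_gt (l + d / 2) (inner ℝ e x) with h'' | h''
    · exact hfar x hx h''
    have key := narrow_min_principle hN (R := R) he (a := l') (b := l + d / 2) hK.le
      (by
        have h1 : (l + d / 2 - l') ^ 2 ≤ d ^ 2 := by
          apply pow_le_pow_left₀ <;> linarith
        nlinarith)
      (w := fun x => u (planeRefl e l' x) - u x)
      (fun y hy => hC2 l' hl' y hy.1 hy.2.1.le) (hcomp l' hl' _) ?_ ?_ x ⟨h, h', h''⟩
    · linarith
    · rintro y hy (h1 | h1 | h1)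
      · have := hsphere l' hl' y h1 hy.2.1
        have : 0 ≤ 4 * c * l' * (inner ℝ e y - l') :=
          mul_nonneg (by positivity) (by linarith [hy.2.1])
        linarith
      · simp only [planeRefl_self e l' y h1]; simp
      · linarith [hfar y hy.1 h1.ge]
    · intro y hy
      rw [hlapw l' hl' y hy.1 hy.2.1.le]
      have hn := norm_planeRefl_le he hl' hy.1.le hy.2.1.le
      rcases le_total (u y) (u (planeRefl e l' y)) with h1 | h1
      · have h2 := hfm y _ hy.1.le hn h1
        have h3 : 0 ≤ K * max (-(u (planeRefl e l' y) - u y)) 0 := by positivity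
        linarith
      · have h2 := hfK _ y hn hy.1.le h1
        have h3 : K * (u y - u (planeRefl e l' y)) ≤ K * max (-(u (planeRefl e l' y) - u y)) 0 :=
          mul_le_mul_of_nonneg_left (by rw [neg_sub]; exact le_max_left _ _) hK.le
        linarith
  have hPR : P R := by
    intro x hx hRx
    rw [planeRefl_self e R x (le_antisymm (inner_le_of_norm_le he hx) hRx)]
  have hclosed : IsClosed ({t : ℝ | P (R - t)} ∩ Icc 0 R) := by
    rw [← isSeqClosed_iff_isClosed]
    intro t s ht hts
    have hs : s ∈ Icc 0 R := isClosed_Icc.mem_of_tendsto hts (Eventually.of_forall fun n => (ht n).2)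
    refine ⟨?_, hs⟩
    intro x hx hlx
    rcases hlx.eq_or_lt with h' | h'
    · rw [planeRefl_self e _ x h'.symm]
    have hev : ∀ᶠ n in atTop, R - t n ≤ inner ℝ e x := by
      have : Tendsto (fun n => R - t n) atTop (nhds (R - s)) := tendsto_const_nhds.sub hts
      filter_upwards [this.eventually (gt_mem_nhds h')] with n hn using hn.le
    have hin : ∀ᶠ n in atTop, planeRefl e (R - t n) x ∈ Metric.closedBall (0 : Euc N) R := by
      filter_upwards [hev] with n hn
      rw [mem_closedBall_zero_iff]
      exact norm_planeRefl_le he (by linarith [(ht n).2.2]) hx hn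
    have hrt : Tendsto (fun n => planeRefl e (R - t n) x) atTop (nhds (planeRefl e (R - s) x)) := by
      have : Continuous fun r : ℝ => planeRefl e (R - r) x := by unfold planeRefl; fun_prop
      exact (this.tendsto s).comp hts
    have hmem : planeRefl e (R - s) x ∈ Metric.closedBall (0 : Euc N) R := by
      rw [mem_closedBall_zero_iff]
      exact norm_planeRefl_le he (by linarith [hs.2]) hx h'.le
    have hut : Tendsto (fun n => u (planeRefl e (R - t n) x)) atTop (nhds (u (planeRefl e (R - s) x))) :=
      (huc _ hmem).tendsto.comp (tendsto_nhdsWithin_iff.2 ⟨hrt, hin⟩)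
    refine ge_of_tendsto hut ?_
    filter_upwards [hev] with n hn
    exact (ht n).1 x hx hn
  have hall := hclosed.Icc_subset_of_forall_mem_nhdsWithin (by simpa using hPR) (by
    rintro t ⟨ht1, ht2⟩
    obtain ⟨δ, hδ, hδP⟩ := hopen (R - t) (by linarith [ht2.2]) (by linarith [ht2.1]) ht1
    have : Ioo t (t + min δ (R - t)) ∈ nhdsWithin t (Ioi t) :=
      Ioo_mem_nhdsGT (by have : 0 < min δ (R - t) := lt_min hδ (by linarith [ht2.2])
                         linarith)
    filter_upwards [this] with s hs
    have h1 := min_le_left δ (R - t)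
    have h2 := min_le_right δ (R - t)
    exact hδP (R - s) (by linarith [hs.2]) (by linarith [hs.1]) (by linarith [hs.2]))
  have hP0 : P (R - R) := hall ⟨hR.le, le_rfl⟩
  rw [sub_self] at hP0
  exact hP0

/-- A function on the ball whose values do not decrease under reflection of the positive side of any
central hyperplane is radial. -/
lemma radial_of_refl {R : ℝ} {u : Euc N → ℝ}
    (h : ∀ e : Euc N, ‖e‖ = 1 → ∀ x, ‖x‖ ≤ R → 0 ≤ inner ℝ e x → u x ≤ u (planeRefl e 0 x)) :
    ∀ x y, ‖x‖ ≤ R → ‖x‖ = ‖y‖ → u x = u y := by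
  have key : ∀ x y, ‖x‖ ≤ R → ‖x‖ = ‖y‖ → u x ≤ u y := by
    intro x y hx hxy
    by_cases hne : x = y
    · rw [hne]
    have hn : ‖x - y‖ ≠ 0 := by rwa [norm_ne_zero_iff, sub_ne_zero]
    set e : Euc N := (‖x - y‖⁻¹) • (x - y) with he
    have he1 : ‖e‖ = 1 := by
      rw [he, norm_smul, norm_inv, norm_norm, inv_mul_cancel₀ hn]
    have hin : inner ℝ (x - y) x = ‖x - y‖ ^ 2 / 2 := by
      have h1 := norm_sub_sq_real x y
      rw [inner_sub_left, real_inner_self_eq_norm_sq, real_inner_comm]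
      rw [h1, ← hxy]
      ring
    have hex : inner ℝ e x = ‖x - y‖ / 2 := by
      rw [he, inner_smul_left, hin]
      simp only [conj_trivial]
      field_simp
    have hr : planeRefl e 0 x = y := by
      rw [planeRefl, hex, he, smul_smul]
      have : 2 * (0 - ‖x - y‖ / 2) * ‖x - y‖⁻¹ = -1 := by field_simp; ring
      rw [this]
      module
    have := h e he1 x hx (by rw [hex]; positivity)
    rwa [hr] at this
  intro x y hx hxy
  exact le_antisymm (key x y hx hxy) (key y x (hxy ▸ hx) hxy.symm)

end MovingPlanes

/-! ### Radial functions and their ordinary differential equation -/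

section Radial

variable {N : ℕ}

lemma contDiffAt_deriv {f : ℝ → ℝ} {x : ℝ} (h : ContDiffAt ℝ 2 f x) :
    ContDiffAt ℝ 1 (deriv f) x := by
  have h1 : ContDiffAt ℝ 1 (fderiv ℝ f) x := h.fderiv_right (by norm_num)
  have h2 : deriv f = fun y => fderiv ℝ f y 1 := by funext y; simp
  rw [h2]
  exact h1.clm_apply contDiffAt_const

lemma norm_smul_unit {e : Euc N} (he : ‖e‖ = 1) {r : ℝ} : ‖r • e‖ = |r| := by
  rw [norm_smul, he, mul_one, Real.norm_eq_abs]

lemma contDiffAt_ray {R : ℝ} {e : Euc N} (he : ‖e‖ = 1) {f : Euc N → ℝ}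
    (hf : ∀ x, ‖x‖ < R → ContDiffAt ℝ 2 f x) {r : ℝ} (hr : |r| < R) :
    ContDiffAt ℝ 2 (fun t : ℝ => f (t • e)) r := by
  have h : ContDiffAt ℝ 2 f (r • e) := hf _ (by rwa [norm_smul_unit he])
  exact ContDiffAt.comp (f := fun t : ℝ => t • e) r h (contDiffAt_id.smul contDiffAt_const)

lemma contDiffAt_profile {R : ℝ} {e : Euc N} (he : ‖e‖ = 1) {f : Euc N → ℝ} (hR : 0 < R)
    (hf : ∀ x, ‖x‖ < R → ContDiffAt ℝ 2 f x) {s : ℝ} (hs : s ∈ Ioo 0 (R ^ 2)) :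
    ContDiffAt ℝ 2 (fun s : ℝ => f (Real.sqrt s • e)) s := by
  have h := contDiffAt_ray he hf (r := Real.sqrt s)
    (by rw [abs_of_nonneg (Real.sqrt_nonneg _)]; exact (Real.sqrt_lt' hR).2 hs.2)
  exact ContDiffAt.comp (g := fun t : ℝ => f (t • e)) s h (Real.contDiffAt_sqrt hs.1.ne')

lemma radial_eq_profile {R : ℝ} {e : Euc N} (he : ‖e‖ = 1) {f : Euc N → ℝ}
    (hrad : ∀ x y, ‖x‖ < R → ‖x‖ = ‖y‖ → f x = f y) {x : Euc N} (hx : ‖x‖ < R) :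
    f x = f (Real.sqrt (‖x‖ ^ 2) • e) := by
  apply hrad x _ hx
  rw [norm_smul_unit he, Real.sqrt_sq (norm_nonneg _), abs_norm]

/-- The Laplacian of a radial function in terms of its profile in the variable `s = ‖x‖²`. -/
lemma lap_radial {R : ℝ} {e : Euc N} (he : ‖e‖ = 1) {f : Euc N → ℝ} (hR : 0 < R)
    (hf : ∀ x, ‖x‖ < R → ContDiffAt ℝ 2 f x)
    (hrad : ∀ x y, ‖x‖ < R → ‖x‖ = ‖y‖ → f x = f y) {x : Euc N} (hx : ‖x‖ < R) (hx0 : 0 < ‖x‖) :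
    lap f x = 4 * ‖x‖ ^ 2 * deriv (deriv fun s : ℝ => f (Real.sqrt s • e)) (‖x‖ ^ 2) +
      2 * N * deriv (fun s : ℝ => f (Real.sqrt s • e)) (‖x‖ ^ 2) := by
  have hs : ‖x‖ ^ 2 ∈ Ioo 0 (R ^ 2) := ⟨by positivity, by gcongr⟩
  have h1 : f =ᶠ[nhds x]
      fun y => (1 + inner ℝ (0 : Euc N) y) * (fun s : ℝ => f (Real.sqrt s • e)) (‖y‖ ^ 2) := by
    have : Metric.ball (0 : Euc N) R ∈ nhds x :=
      Metric.isOpen_ball.mem_nhds (by rwa [mem_ball_zero_iff])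
    filter_upwards [this] with y hy
    rw [mem_ball_zero_iff] at hy
    simp only [inner_zero_left, add_zero, one_mul]
    exact radial_eq_profile he hrad hy
  rw [lap_congr h1, lap_affine_mul_radial _ _ _ (contDiffAt_profile he hR hf hs)]
  simp

/-- The radial form `(r^{N-1} g')' = r^{N-1} Δf` of the Laplacian, where `g(r) = f(r e)`. -/
lemma hasDerivAt_flux (hN : 2 ≤ N) {R : ℝ} {e : Euc N} (he : ‖e‖ = 1) {f : Euc N → ℝ} (hR : 0 < R)
    (hf : ∀ x, ‖x‖ < R → ContDiffAt ℝ 2 f x)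
    (hrad : ∀ x y, ‖x‖ < R → ‖x‖ = ‖y‖ → f x = f y) {r : ℝ} (hr : r ∈ Ioo 0 R) :
    HasDerivAt (fun t : ℝ => t ^ (N - 1) * deriv (fun t : ℝ => f (t • e)) t)
      (r ^ (N - 1) * lap f (r • e)) r := by
  have hK := fun (s : ℝ) hs => contDiffAt_profile (s := s) he hR hf hs
  set K : ℝ → ℝ := fun s : ℝ => f (Real.sqrt s • e) with hKdef
  have hsq : ∀ t ∈ Ioo 0 R, t ^ 2 ∈ Ioo 0 (R ^ 2) := fun t ht =>
    ⟨by have := ht.1; positivity, pow_lt_pow_left₀ ht.2 ht.1.le two_ne_zero⟩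
  have hg : ∀ t ∈ Ioo 0 R, deriv (fun t : ℝ => f (t • e)) t = 2 * t * deriv K (t ^ 2) := by
    intro t ht
    have h1 : (fun t : ℝ => f (t • e)) =ᶠ[nhds t] fun t => K (t ^ 2) := by
      filter_upwards [Ioo_mem_nhds ht.1 ht.2] with y hy
      rw [hKdef]
      simp only [Real.sqrt_sq hy.1.le]
    rw [h1.deriv_eq]
    have h2 : HasDerivAt K (deriv K (t ^ 2)) (t ^ 2) :=
      ((hK _ (hsq t ht)).differentiableAt two_ne_zero).hasDerivAt
    have h3 : HasDerivAt (fun t : ℝ => t ^ 2) (2 * t) t := by simpa using hasDerivAt_pow 2 t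
    have := (HasDerivAt.comp (h := fun t : ℝ => t ^ 2) t h2 h3).deriv
    simp only [Function.comp_def] at this
    rw [this]; ring
  have hev : (fun t : ℝ => t ^ (N - 1) * deriv (fun t : ℝ => f (t • e)) t) =ᶠ[nhds r]
      fun t => 2 * t ^ N * deriv K (t ^ 2) := by
    filter_upwards [Ioo_mem_nhds hr.1 hr.2] with t ht
    rw [hg t ht]
    obtain ⟨k, rfl⟩ : ∃ k, N = k + 1 := ⟨N - 1, by omega⟩
    simp only [Nat.add_sub_cancel]
    ring
  refine HasDerivAt.congr_of_eventuallyEq ?_ hev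
  have h2 : HasDerivAt (deriv K) (deriv (deriv K) (r ^ 2)) (r ^ 2) := by
    exact ((contDiffAt_deriv (hK _ (hsq r hr))).differentiableAt one_ne_zero).hasDerivAt
  have h3 : HasDerivAt (fun t : ℝ => t ^ 2) (2 * r) r := by simpa using hasDerivAt_pow 2 r
  have h4 := ((hasDerivAt_pow N r).const_mul 2).mul (HasDerivAt.comp (h := fun t : ℝ => t ^ 2) r h2 h3)
  refine h4.congr_deriv ?_
  have hn : ‖r • e‖ = r := by rw [norm_smul_unit he, abs_of_pos hr.1]
  rw [lap_radial he hR hf hrad (x := r • e) (by rw [hn]; exact hr.2) (by rw [hn]; exact hr.1), hn]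
  obtain ⟨k, rfl⟩ : ∃ k, N = k + 1 := ⟨N - 1, by omega⟩
  simp only [Nat.add_sub_cancel, Function.comp_def]
  push_cast
  ring

lemma continuousAt_flux {R : ℝ} {e : Euc N} (he : ‖e‖ = 1) {f : Euc N → ℝ}
    (hf : ∀ x, ‖x‖ < R → ContDiffAt ℝ 2 f x) {r : ℝ} (hr : |r| < R) :
    ContinuousAt (fun t : ℝ => t ^ (N - 1) * deriv (fun t : ℝ => f (t • e)) t) r := by
  have h := contDiffAt_ray he hf hr
  exact (continuousAt_id.pow _).mul (contDiffAt_deriv h).continuousAt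

end Radial

/-! ### The derivative of a radial solution -/

section Linearized

variable {N : ℕ}

/-- Two-sided bounds for the slope of a radial function whose Laplacian is pinched, obtained by
integrating `(r^{N-1} g')' = r^{N-1} Δf`. -/
lemma flux_bounds (hN : 2 ≤ N) {R : ℝ} {e : Euc N} (he : ‖e‖ = 1) {f : Euc N → ℝ} (hR : 0 < R)
    (hf : ∀ x, ‖x‖ < R → ContDiffAt ℝ 2 f x)
    (hrad : ∀ x y, ‖x‖ < R → ‖x‖ = ‖y‖ → f x = f y) {m M : ℝ}
    (hm : ∀ x, ‖x‖ < R → lap f x ≤ -m) (hM : ∀ x, ‖x‖ < R → -M ≤ lap f x)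
    {r : ℝ} (hr : r ∈ Ioo 0 R) :
    -(M / N) * r ≤ deriv (fun t : ℝ => f (t • e)) r ∧
      deriv (fun t : ℝ => f (t • e)) r ≤ -(m / N) * r := by
  obtain ⟨k, rfl⟩ : ∃ k, N = k + 2 := ⟨N - 2, by omega⟩
  have hNp : (0 : ℝ) < ((k + 2 : ℕ) : ℝ) := by positivity
  set F : ℝ → ℝ := fun t : ℝ => t ^ (k + 2 - 1) * deriv (fun t : ℝ => f (t • e)) t with hF
  have hcont : ∀ c : ℝ, ContinuousOn (fun t => F t + c / ((k + 2 : ℕ) : ℝ) * t ^ (k + 2)) (Ico 0 R) := by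
    intro c t ht
    have h1 : ContinuousAt F t := continuousAt_flux he hf (by rw [abs_of_nonneg ht.1]; exact ht.2)
    exact (h1.add (by fun_prop)).continuousWithinAt
  have hder : ∀ c : ℝ, ∀ t ∈ Ioo 0 R, HasDerivAt (fun t => F t + c / ((k + 2 : ℕ) : ℝ) * t ^ (k + 2))
      (t ^ (k + 1) * (lap f (t • e) + c)) t := by
    intro c t ht
    have h1 := (hasDerivAt_flux hN he hR hf hrad ht).add
      ((hasDerivAt_pow (k + 2) t).const_mul (c / ((k + 2 : ℕ) : ℝ)))
    refine h1.congr_deriv ?_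
    have : k + 2 - 1 = k + 1 := by omega
    rw [this]
    field_simp
  have hnorm : ∀ t ∈ Ioo 0 R, ‖t • e‖ < R := fun t ht => by
    rw [norm_smul_unit he, abs_of_pos ht.1]; exact ht.2
  have hpow : ∀ t ∈ Ioo 0 R, 0 ≤ t ^ (k + 1) := fun t ht => pow_nonneg ht.1.le _
  have hanti : AntitoneOn (fun t => F t + m / ((k + 2 : ℕ) : ℝ) * t ^ (k + 2)) (Ico 0 R) := by
    apply antitoneOn_of_deriv_nonpos (convex_Ico 0 R) (hcont m)
    · rw [interior_Ico]
      exact fun t ht => (hder m t ht).differentiableAt.differentiableWithinAt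
    · rw [interior_Ico]
      intro t ht
      rw [(hder m t ht).deriv]
      exact mul_nonpos_of_nonneg_of_nonpos (hpow t ht) (by linarith [hm _ (hnorm t ht)])
  have hmono : MonotoneOn (fun t => F t + M / ((k + 2 : ℕ) : ℝ) * t ^ (k + 2)) (Ico 0 R) := by
    apply monotoneOn_of_deriv_nonneg (convex_Ico 0 R) (hcont M)
    · rw [interior_Ico]
      exact fun t ht => (hder M t ht).differentiableAt.differentiableWithinAt
    · rw [interior_Ico]
      intro t ht
      rw [(hder M t ht).deriv]
      exact mul_nonneg (hpow t ht) (by linarith [hM _ (hnorm t ht)])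
  have h0 : (0 : ℝ) ∈ Ico 0 R := ⟨le_rfl, hR⟩
  have hr' : r ∈ Ico 0 R := ⟨hr.1.le, hr.2⟩
  have h1 := hanti h0 hr' hr.1.le
  have h2 := hmono h0 hr' hr.1.le
  have h3 : k + 2 - 1 = k + 1 := by omega
  simp only [hF, h3, ne_eq, Nat.add_eq_zero_iff, one_ne_zero, OfNat.ofNat_ne_zero, and_false,
    not_false_eq_true, zero_pow, zero_mul, mul_zero, add_zero] at h1 h2
  have hp : 0 < r ^ (k + 1) := pow_pos hr.1 _
  constructor
  · refine le_of_mul_le_mul_left ?_ hp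
    calc _ = -(M / ((k + 2 : ℕ) : ℝ) * r ^ (k + 2)) := by ring
      _ ≤ _ := by linarith
  · refine le_of_mul_le_mul_left ?_ hp
    calc _ ≤ -(m / ((k + 2 : ℕ) : ℝ) * r ^ (k + 2)) := by linarith
      _ = _ := by ring

/-- If `u(x) = K(‖x‖²)` is a radial solution of `-Δu = H(u)`, the directional derivative `-∂ₑu` has
the form `⟨e, x⟩ G(‖x‖²)` with `G = -2K'`; it solves the linearized equation, and `G` is pinched
between positive constants as soon as `H(u)` is. -/
lemma exists_linearized_solution (hN : 2 ≤ N) {R : ℝ} (hR : 0 < R) {u : Euc N → ℝ} {H : ℝ → ℝ}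
    {m M : ℝ} (hu2 : ∀ x, ‖x‖ < R → ContDiffAt ℝ 2 u x)
    (hrad : ∀ x y, ‖x‖ < R → ‖x‖ = ‖y‖ → u x = u y)
    (hlap : ∀ x, ‖x‖ < R → lap u x = -H (u x)) (hH : ∀ x, ‖x‖ < R → ContDiffAt ℝ 1 H (u x))
    (hm : ∀ x, ‖x‖ < R → m ≤ H (u x)) (hM : ∀ x, ‖x‖ < R → H (u x) ≤ M) :
    ∃ G : ℝ → ℝ, (∀ s ∈ Ioo 0 (R ^ 2), ContDiffAt ℝ 2 G s ∧ m / N ≤ G s ∧ G s ≤ M / N) ∧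
      ∀ e x : Euc N, 0 < ‖x‖ → ‖x‖ < R → lap (fun y => inner ℝ e y * G (‖y‖ ^ 2)) x =
        -(deriv H (u x) * (inner ℝ e x * G (‖x‖ ^ 2))) := by
  obtain ⟨e, he⟩ : ∃ e : Euc N, ‖e‖ = 1 := ⟨EuclideanSpace.single ⟨0, by omega⟩ 1, by simp⟩
  set K : ℝ → ℝ := fun s : ℝ => u (Real.sqrt s • e) with hKdef
  have hK : ∀ s ∈ Ioo 0 (R ^ 2), ContDiffAt ℝ 2 K s := fun s hs => contDiffAt_profile he hR hu2 hs
  have hsq : ∀ s ∈ Ioo 0 (R ^ 2), Real.sqrt s ∈ Ioo 0 R := fun s hs =>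
    ⟨Real.sqrt_pos.2 hs.1, (Real.sqrt_lt' hR).2 hs.2⟩
  have hnorm : ∀ s ∈ Ioo 0 (R ^ 2), ‖Real.sqrt s • e‖ = Real.sqrt s := fun s _ => by
    rw [norm_smul_unit he, abs_of_nonneg (Real.sqrt_nonneg _)]
  have hnormlt : ∀ s ∈ Ioo 0 (R ^ 2), ‖Real.sqrt s • e‖ < R := fun s hs => by
    rw [hnorm s hs]; exact (hsq s hs).2
  have hode : ∀ s ∈ Ioo 0 (R ^ 2), 4 * s * deriv (deriv K) s + 2 * N * deriv K s = -H (K s) := by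
    intro s hs
    have h1 := lap_radial he hR hu2 hrad (hnormlt s hs) (by rw [hnorm s hs]; exact (hsq s hs).1)
    rw [hnorm s hs, Real.sq_sqrt hs.1.le, hlap _ (hnormlt s hs)] at h1
    exact h1.symm
  have hHK : ∀ s ∈ Ioo 0 (R ^ 2), ContDiffAt ℝ 1 (fun s => H (K s)) s := fun s hs =>
    ContDiffAt.comp s (hH _ (hnormlt s hs)) ((hK s hs).of_le one_le_two)
  have hK1 : ∀ s ∈ Ioo 0 (R ^ 2), ContDiffAt ℝ 1 (deriv K) s := fun s hs => contDiffAt_deriv (hK s hs)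
  -- the equation, solved for `K''`, gains one derivative
  have hK2 : ∀ s ∈ Ioo 0 (R ^ 2), ContDiffAt ℝ 1 (deriv (deriv K)) s := by
    intro s hs
    have h1 : deriv (deriv K) =ᶠ[nhds s] fun s => (-H (K s) - 2 * N * deriv K s) / (4 * s) := by
      filter_upwards [Ioo_mem_nhds hs.1 hs.2] with t ht
      have h2 := hode t ht
      have h3 : t ≠ 0 := ht.1.ne'
      rw [eq_div_iff (by positivity)]
      linarith
    refine ContDiffAt.congr_of_eventuallyEq ?_ h1
    exact ((hHK s hs).neg.sub (contDiffAt_const.mul (hK1 s hs))).div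
      (contDiffAt_const.mul contDiffAt_id) (by have := hs.1; positivity)
  have hK12 : ∀ s ∈ Ioo 0 (R ^ 2), ContDiffAt ℝ 2 (deriv K) s := by
    have : ContDiffOn ℝ (1 + 1) (deriv K) (Ioo 0 (R ^ 2)) := by
      rw [contDiffOn_succ_iff_deriv_of_isOpen isOpen_Ioo]
      refine ⟨fun s hs => ((hK1 s hs).differentiableAt one_ne_zero).differentiableWithinAt, ?_,
        fun s hs => (hK2 s hs).contDiffWithinAt⟩
      intro h
      exact absurd h (by decide)
    rw [one_add_one_eq_two] at this
    exact fun s hs => (this s hs).contDiffAt (Ioo_mem_nhds hs.1 hs.2)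
  have hode' : ∀ s ∈ Ioo 0 (R ^ 2), (2 * N + 4) * deriv (deriv K) s +
      4 * s * deriv (deriv (deriv K)) s = -(deriv H (K s) * deriv K s) := by
    intro s hs
    have d0 : HasDerivAt K (deriv K s) s := ((hK s hs).differentiableAt two_ne_zero).hasDerivAt
    have d1 : HasDerivAt (deriv K) (deriv (deriv K) s) s :=
      ((hK1 s hs).differentiableAt one_ne_zero).hasDerivAt
    have d2 : HasDerivAt (deriv (deriv K)) (deriv (deriv (deriv K)) s) s :=
      ((hK2 s hs).differentiableAt one_ne_zero).hasDerivAt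
    have dH : HasDerivAt H (deriv H (K s)) (K s) :=
      ((hH _ (hnormlt s hs)).differentiableAt one_ne_zero).hasDerivAt
    have dl := (((hasDerivAt_id s).const_mul 4).mul d2).add (d1.const_mul (2 * (N:ℝ)))
    have dr := (dH.comp s d0).neg
    have heq : (fun s => 4 * s * deriv (deriv K) s + 2 * N * deriv K s) =ᶠ[nhds s]
        fun s => -H (K s) := by
      filter_upwards [Ioo_mem_nhds hs.1 hs.2] with t ht using hode t ht
    have h1 := (dl.congr_of_eventuallyEq heq.symm).unique dr
    simp only [id] at h1
    linarith
  have hslope : ∀ s ∈ Ioo 0 (R ^ 2),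
      deriv (fun t : ℝ => u (t • e)) (Real.sqrt s) = 2 * Real.sqrt s * deriv K s := by
    intro s hs
    have hd : HasDerivAt (fun t : ℝ => u (t • e)) (deriv (fun t : ℝ => u (t • e)) (Real.sqrt s))
        (Real.sqrt s) :=
      ((contDiffAt_ray he hu2 (by
        rw [abs_of_nonneg (Real.sqrt_nonneg _)]; exact (hsq s hs).2)).differentiableAt
          two_ne_zero).hasDerivAt
    have h1 := (hd.comp s (Real.hasDerivAt_sqrt hs.1.ne')).deriv
    have h2 : deriv K s = deriv (fun t : ℝ => u (t • e)) (Real.sqrt s) * (1 / (2 * Real.sqrt s)) := h1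
    have h3 : Real.sqrt s ≠ 0 := (hsq s hs).1.ne'
    rw [h2]
    field_simp
  refine ⟨fun s => -2 * deriv K s, fun s hs => ⟨contDiffAt_const.mul (hK12 s hs), ?_⟩, ?_⟩
  · have h1 := flux_bounds hN he hR hu2 hrad (m := m) (M := M)
      (fun x hx => by rw [hlap x hx]; linarith [hm x hx])
      (fun x hx => by rw [hlap x hx]; linarith [hM x hx]) (hsq s hs)
    rw [hslope s hs] at h1
    have h2 := (hsq s hs).1
    constructor
    · refine le_of_mul_le_mul_right ?_ h2
      linarith [h1.2]
    · refine le_of_mul_le_mul_right ?_ h2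
      linarith [h1.1]
  · intro a x hx0 hx
    have hs : ‖x‖ ^ 2 ∈ Ioo 0 (R ^ 2) := ⟨by positivity, by gcongr⟩
    have h1 := lap_affine_mul_radial (K := fun s => -2 * deriv K s) a x 0
      (contDiffAt_const.mul (hK12 _ hs))
    simp only [zero_add] at h1
    have hd1 : deriv (fun s => -2 * deriv K s) = fun s => -2 * deriv (deriv K) s := by
      funext s; exact deriv_const_mul_field _
    have hd2 : deriv (fun s => -2 * deriv (deriv K) s) = fun s => -2 * deriv (deriv (deriv K)) s := by
      funext s; exact deriv_const_mul_field _
    rw [h1, hd1, hd2]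
    have h2 := hode' _ hs
    have h3 : K (‖x‖ ^ 2) = u x := (radial_eq_profile he hrad hx).symm
    rw [h3] at h2
    linear_combination (-2 * inner ℝ a x) * h2

end Linearized

/-! ### Comparison of odd solutions of the linearized equation -/

section Odd

variable {N : ℕ}

/-- On a half ball, a solution `z` of `-Δz = q z` vanishing on the whole boundary is nonpositive as
soon as the same equation has a solution `v` comparable with the height `⟨e, x⟩`. Starting from
`z ≤ t v`, the superharmonic function `t v - z` dominates the harmonic function `c t ⟨e, x⟩`, which
improves `t` by a fixed factor smaller than one; no boundary lemma is needed. -/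
lemma nonpos_of_comparison (hN : 0 < N) {R : ℝ} (hR : 0 < R) {e : Euc N} (he : ‖e‖ = 1)
    {z v q : Euc N → ℝ} {Q c C : ℝ} (hc : 0 < c) (hC : 0 < C)
    (hzc : ContinuousOn z (cslab R e 0 (R + 1)))
    (hz2 : ∀ x ∈ slab R e 0 (R + 1), ContDiffAt ℝ 2 z x)
    (hzb : ∀ x, ‖x‖ = R → 0 ≤ inner ℝ e x → z x = 0)
    (hz0 : ∀ x, ‖x‖ ≤ R → inner ℝ e x = 0 → z x = 0)
    (hzl : ∀ x ∈ slab R e 0 (R + 1), lap z x = -(q x * z x))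
    (hv2 : ∀ x ∈ slab R e 0 (R + 1), ContDiffAt ℝ 2 v x)
    (hvl : ∀ x ∈ slab R e 0 (R + 1), lap v x = -(q x * v x))
    (hvc : ∀ x ∈ slab R e 0 (R + 1), c * inner ℝ e x ≤ v x)
    (hvC : ∀ x ∈ slab R e 0 (R + 1), v x ≤ C * inner ℝ e x)
    (hq0 : ∀ x ∈ slab R e 0 (R + 1), 0 ≤ q x) (hqQ : ∀ x ∈ slab R e 0 (R + 1), q x ≤ Q) :
    ∀ x ∈ slab R e 0 (R + 1), z x ≤ 0 := by
  intro x₀ hx₀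
  have hQ : 0 ≤ Q := (hq0 x₀ hx₀).trans (hqQ x₀ hx₀)
  have hbd : ∀ y ∈ cslab R e 0 (R + 1), (‖y‖ = R ∨ inner ℝ e y = 0 ∨ inner ℝ e y = R + 1) →
      z y = 0 := by
    rintro y hy (h | h | h)
    · exact hzb y h hy.2.1
    · exact hz0 y hy.1 h
    · linarith [inner_le_of_norm_le he hy.1]
  obtain ⟨B, hB⟩ := (isCompact_cslab R e 0 (R + 1)).exists_bound_of_continuousOn hzc
  have hB0 : 0 ≤ B := (norm_nonneg _).trans (hB x₀ (slab_subset_cslab _ _ _ _ hx₀))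
  set A := Q * B / 2 with hA
  have hA0 : 0 ≤ A := by positivity
  have hinner : Continuous fun y : Euc N => inner ℝ e y := (contDiff_inner_left e).continuous
  have hinit : ∀ x ∈ slab R e 0 (R + 1), z x ≤ (2 * R * A / c) * v x := by
    intro x hx
    have hquad : ∀ y : Euc N, ContDiffAt ℝ 2
        (fun y : Euc N => A * ((inner ℝ e y - 0) * (2 * R - inner ℝ e y))) y := by
      intro y
      have h := (contDiff_inner_left e).contDiffAt (x := y)
      exact contDiffAt_const.mul ((h.sub contDiffAt_const).mul (contDiffAt_const.sub h))
    have key := slab_min_principle hN (R := R) (e := e) (a := 0) (b := R + 1)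
      (w := fun y => A * ((inner ℝ e y - 0) * (2 * R - inner ℝ e y)) - z y)
      (β := fun y => A * ((inner ℝ e y - 0) * (2 * R - inner ℝ e y)) - z y)
      (fun y hy => (hquad y).sub (hz2 y hy))
      (ContinuousOn.sub (fun y _ => (hquad y).continuousAt.continuousWithinAt) hzc)
      (fun _ _ => le_rfl) ?_ ?_ x hx
    · have h1 : 0 < inner ℝ e x := hx.2.1
      have h2 : A * ((inner ℝ e x - 0) * (2 * R - inner ℝ e x)) ≤ 2 * R * A * inner ℝ e x := by
        have : 0 ≤ A * (inner ℝ e x) ^ 2 := by positivity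
        linarith
      have h3 : 2 * R * A * inner ℝ e x = (2 * R * A / c) * (c * inner ℝ e x) := by field_simp
      have h4 : (2 * R * A / c) * (c * inner ℝ e x) ≤ (2 * R * A / c) * v x :=
        mul_le_mul_of_nonneg_left (hvc x hx) (by positivity)
      linarith
    · intro y hy hby
      rw [hbd y hy hby]
      have h1 := inner_le_of_norm_le he hy.1
      have h2 : 0 ≤ inner ℝ e y := hy.2.1
      have : 0 ≤ A * ((inner ℝ e y - 0) * (2 * R - inner ℝ e y)) :=
        mul_nonneg hA0 (mul_nonneg (by linarith) (by linarith))
      linarith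
    · intro y hy
      rw [lap_sub (hquad y) (hz2 y hy), lap_slab_quadratic e y he, hzl y hy]
      have h1 : |z y| ≤ B := hB y (slab_subset_cslab _ _ _ _ hy)
      have h2 : q y * z y ≤ Q * B :=
        (mul_le_mul_of_nonneg_left ((le_abs_self _).trans h1) (hq0 y hy)).trans
          (mul_le_mul_of_nonneg_right (hqQ y hy) hB0)
      linarith
  have hstep : ∀ t, 0 ≤ t → (∀ x ∈ slab R e 0 (R + 1), z x ≤ t * v x) →
      ∀ x ∈ slab R e 0 (R + 1), z x ≤ (t * (1 - c / C)) * v x := by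
    intro t ht hzt x hx
    have hlin : ∀ y : Euc N, ContDiffAt ℝ 2
        (fun y : Euc N => (0 + inner ℝ ((c * t) • e) y) * 1) y := fun y =>
      (contDiffAt_const.add (contDiff_inner_left _).contDiffAt).mul contDiffAt_const
    have hval : ∀ y : Euc N, (0 + inner ℝ ((c * t) • e) y) * 1 = c * t * inner ℝ e y := by
      intro y
      rw [inner_smul_left]
      simp
    have hd : ∀ y ∈ slab R e 0 (R + 1), ContDiffAt ℝ 2 (fun y => t * v y + (-1) * z y) y :=
      fun y hy => (contDiffAt_const.mul (hv2 y hy)).add (contDiffAt_const.mul (hz2 y hy))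
    have key := slab_min_principle hN (R := R) (e := e) (a := 0) (b := R + 1)
      (w := fun y => (t * v y + (-1) * z y) - (0 + inner ℝ ((c * t) • e) y) * 1)
      (β := fun y => -z y)
      (fun y hy => (hd y hy).sub (hlin y)) hzc.neg ?_ ?_ ?_ x hx
    · rw [hval] at key
      have h1 : c / C * v x ≤ c * inner ℝ e x := by
        calc c / C * v x ≤ c / C * (C * inner ℝ e x) :=
              mul_le_mul_of_nonneg_left (hvC x hx) (by positivity)
          _ = _ := by field_simp
      have h2 := mul_le_mul_of_nonneg_left h1 ht
      linarith
    · intro y hy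
      rw [hval]
      have := mul_le_mul_of_nonneg_left (hvc y hy) ht
      linarith
    · intro y hy hby
      rw [hbd y hy hby]
      simp
    · intro y hy
      rw [lap_sub (hd y hy) (hlin y), lap_lincomb (hv2 y hy) (hz2 y hy), hvl y hy, hzl y hy]
      have := lap_affine_mul_radial (K := fun _ => 1) ((c * t) • e) y 0 (by fun_prop)
      simp only [deriv_const', deriv_const, mul_zero, add_zero] at this
      rw [this]
      have h1 := mul_nonneg (hq0 y hy) (sub_nonneg.2 (hzt y hy))
      linarith
  have hcC : c ≤ C := by
    have h1 : 0 < inner ℝ e x₀ := hx₀.2.1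
    exact le_of_mul_le_mul_right ((hvc x₀ hx₀).trans (hvC x₀ hx₀)) h1
  have hθ0 : 0 ≤ 1 - c / C := sub_nonneg.2 ((div_le_one hC).2 hcC)
  have hθ1 : 1 - c / C < 1 := by have : 0 < c / C := by positivity
                                 linarith
  have hiter : ∀ n : ℕ, ∀ x ∈ slab R e 0 (R + 1),
      z x ≤ ((2 * R * A / c) * (1 - c / C) ^ n) * v x := by
    intro n
    induction n with
    | zero => simpa using hinit
    | succ n ih =>
      have := hstep _ (by positivity) ih
      intro x hx
      rw [pow_succ, ← mul_assoc]
      exact this x hx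
  have hlim : Tendsto (fun n : ℕ => ((2 * R * A / c) * (1 - c / C) ^ n) * v x₀) atTop (nhds 0) := by
    have := ((tendsto_pow_atTop_nhds_zero_of_lt_one hθ0 hθ1).const_mul (2 * R * A / c)).mul_const
      (v x₀)
    simpa using this
  exact ge_of_tendsto' hlim fun n => hiter n x₀ hx₀

/-- A solution of the linearized equation `-Δφ = H'(u) φ` around a radial solution `u` is itself
radial when it vanishes on the sphere: its odd part in any direction is compared with the
directional derivative of `u`. -/
lemma eigenfunction_radial (hN : 2 ≤ N) {R : ℝ} (hR : 0 < R) {u φ : Euc N → ℝ} {H : ℝ → ℝ}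
    {m M Q : ℝ} (hu2 : ∀ x, ‖x‖ < R → ContDiffAt ℝ 2 u x)
    (hrad : ∀ x y, ‖x‖ < R → ‖x‖ = ‖y‖ → u x = u y)
    (hlap : ∀ x, ‖x‖ < R → lap u x = -H (u x)) (hH : ∀ x, ‖x‖ < R → ContDiffAt ℝ 1 H (u x))
    (hm0 : 0 < m) (hm : ∀ x, ‖x‖ < R → m ≤ H (u x)) (hM : ∀ x, ‖x‖ < R → H (u x) ≤ M)
    (hq0 : ∀ x, ‖x‖ < R → 0 ≤ deriv H (u x)) (hqQ : ∀ x, ‖x‖ < R → deriv H (u x) ≤ Q)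
    (hφc : ContinuousOn φ (Metric.closedBall 0 R))
    (hφ2 : ∀ x, ‖x‖ < R → ContDiffAt ℝ 2 φ x) (hφb : ∀ x, ‖x‖ = R → φ x = 0)
    (hφl : ∀ x, ‖x‖ < R → lap φ x = -(deriv H (u x) * φ x)) :
    ∀ x y, ‖x‖ ≤ R → ‖x‖ = ‖y‖ → φ x = φ y := by
  obtain ⟨G, hG, hGl⟩ := exists_linearized_solution hN hR hu2 hrad hlap hH hm hM
  have hNp : (0 : ℝ) < N := by exact_mod_cast (by omega : 0 < N)
  have hmM : 0 < M := hm0.trans_le ((hm 0 (by simpa using hR)).trans (hM 0 (by simpa using hR)))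
  apply radial_of_refl
  intro e he x hx hxe
  have hnr : ∀ y : Euc N, ‖planeRefl e 0 y‖ = ‖y‖ := by
    intro y
    have h := norm_planeRefl_sq e he 0 y
    simp only [mul_zero, zero_mul, add_zero] at h
    exact (sq_eq_sq₀ (norm_nonneg _) (norm_nonneg _)).1 h
  rcases hxe.eq_or_lt with h0 | h0
  · rw [planeRefl_self e 0 x h0.symm]
  rcases hx.eq_or_lt with h1 | h1
  · rw [hφb x h1, hφb _ ((hnr x).trans h1)]
  have hpos : ∀ y ∈ slab R e 0 (R + 1), 0 < ‖y‖ := by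
    intro y hy
    exact hy.2.1.trans_le (inner_le_of_norm_le he le_rfl)
  have hs : ∀ y ∈ slab R e 0 (R + 1), ‖y‖ ^ 2 ∈ Ioo 0 (R ^ 2) := by
    intro y hy
    have h1 := hpos y hy
    have h2 : ‖y‖ < R := hy.1
    exact ⟨by positivity, by gcongr⟩
  have hr2 : ∀ y, ‖y‖ < R → ContDiffAt ℝ 2 (fun y => φ (planeRefl e 0 y)) y := fun y hy =>
    contDiffAt_planeRefl (hφ2 _ (by rwa [hnr]))
  have key := nonpos_of_comparison (by omega) hR he
    (z := fun y => φ y - φ (planeRefl e 0 y)) (v := fun y => inner ℝ e y * G (‖y‖ ^ 2))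
    (q := fun y => deriv H (u y)) (Q := Q) (c := m / N) (C := M / N) (by positivity) (by positivity)
    ?_ ?_ ?_ ?_ ?_ ?_ ?_ ?_ ?_ ?_ ?_ x ⟨h1, h0, by linarith [inner_le_of_norm_le he hx]⟩
  · linarith
  · have hsub : ∀ y ∈ cslab R e 0 (R + 1), y ∈ Metric.closedBall (0 : Euc N) R :=
      fun y hy => by rw [mem_closedBall_zero_iff]; exact hy.1
    refine (hφc.mono hsub).sub (hφc.comp (continuous_planeRefl e 0).continuousOn ?_)
    intro y hy
    rw [mem_closedBall_zero_iff, hnr]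
    exact hy.1
  · exact fun y hy => (hφ2 y hy.1).sub (hr2 y hy.1)
  · intro y hy _
    simp only [hφb y hy, hφb _ ((hnr y).trans hy), sub_self]
  · intro y _ hy
    simp only [planeRefl_self e 0 y hy, sub_self]
  · intro y hy
    have h2 : ‖planeRefl e 0 y‖ < R := by rw [hnr]; exact hy.1
    rw [lap_sub (hφ2 y hy.1) (hr2 y hy.1), lap_planeRefl he (hφ2 _ h2), hφl y hy.1, hφl _ h2,
      hrad _ y h2 (hnr y)]
    ring
  · intro y hy
    have h2 : ContDiffAt ℝ 2 (fun y : Euc N => ‖y‖ ^ 2) y := (contDiff_norm_sq ℝ).contDiffAt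
    exact (contDiff_inner_left e).contDiffAt.mul
      (ContDiffAt.comp (f := fun y : Euc N => ‖y‖ ^ 2) y (hG _ (hs y hy)).1 h2)
  · exact fun y hy => hGl e y (hpos y hy) hy.1
  · intro y hy
    have h2 : 0 < inner ℝ e y := hy.2.1
    rw [mul_comm]
    exact mul_le_mul_of_nonneg_left (hG _ (hs y hy)).2.1 h2.le
  · intro y hy
    have h2 : 0 < inner ℝ e y := hy.2.1
    rw [mul_comm (M / (N:ℝ))]
    exact mul_le_mul_of_nonneg_left (hG _ (hs y hy)).2.2 h2.le
  · exact fun y hy => hq0 y hy.1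
  · exact fun y hy => hqQ y hy.1

end Odd

/-! ### Radial solutions with vanishing Cauchy data -/

section Cauchy

variable {N : ℕ}

/-- Uniqueness for a linear first order system with vanishing terminal data, through the monotone
quantity `exp((A + B) r) (g² + Y²)`. -/
lemma linear_system_eq_zero {r₀ R : ℝ} {g Y a b : ℝ → ℝ} {A B : ℝ}
    (hgc : ContinuousOn g (Icc r₀ R)) (hYc : ContinuousOn Y (Icc r₀ R))
    (hg : ∀ r ∈ Ioo r₀ R, HasDerivAt g (a r * Y r) r)
    (hY : ∀ r ∈ Ioo r₀ R, HasDerivAt Y (b r * g r) r)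
    (ha : ∀ r ∈ Ioo r₀ R, |a r| ≤ A) (hb : ∀ r ∈ Ioo r₀ R, |b r| ≤ B)
    (hgR : g R = 0) (hYR : Y R = 0) (h : r₀ ≤ R) : g r₀ = 0 := by
  set E : ℝ → ℝ := fun r => Real.exp ((A + B) * r) * (g r ^ 2 + Y r ^ 2) with hE
  have hEd : ∀ r ∈ Ioo r₀ R, HasDerivAt E (Real.exp ((A + B) * r) *
      ((A + B) * (g r ^ 2 + Y r ^ 2) + 2 * (a r + b r) * (g r * Y r))) r := by
    intro r hr
    have h1 : HasDerivAt (fun r => Real.exp ((A + B) * r)) (Real.exp ((A + B) * r) * (A + B)) r := by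
      have := ((hasDerivAt_id r).const_mul (A + B)).exp
      simpa using this
    have h2 := h1.mul (((hg r hr).pow 2).add ((hY r hr).pow 2))
    refine h2.congr_deriv ?_
    simp only [Pi.add_apply, Pi.pow_apply]
    push_cast
    ring
  have hmono : MonotoneOn E (Icc r₀ R) := by
    apply monotoneOn_of_deriv_nonneg (convex_Icc _ _)
    · exact (by fun_prop : Continuous fun r => Real.exp ((A + B) * r)).continuousOn.mul
        ((hgc.pow 2).add (hYc.pow 2))
    · rw [interior_Icc]
      exact fun r hr => (hEd r hr).differentiableAt.differentiableWithinAt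
    · rw [interior_Icc]
      intro r hr
      rw [(hEd r hr).deriv]
      apply mul_nonneg (Real.exp_pos _).le
      have h1 : |2 * (a r + b r) * (g r * Y r)| ≤ (A + B) * (g r ^ 2 + Y r ^ 2) := by
        have h2 : |a r + b r| ≤ A + B := (abs_add_le _ _).trans (add_le_add (ha r hr) (hb r hr))
        have h3 : 2 * |g r * Y r| ≤ g r ^ 2 + Y r ^ 2 := by
          rw [abs_mul, ← sq_abs (g r), ← sq_abs (Y r)]
          nlinarith [sq_nonneg (|g r| - |Y r|)]
        calc |2 * (a r + b r) * (g r * Y r)| = |a r + b r| * (2 * |g r * Y r|) := by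
              rw [abs_mul, abs_mul, abs_two]; ring
          _ ≤ _ := mul_le_mul h2 h3 (by positivity) ((abs_nonneg _).trans h2)
      linarith [neg_le_of_abs_le h1]
  have h1 := hmono (left_mem_Icc.2 h) (right_mem_Icc.2 h) h
  simp only [hE, hgR, hYR] at h1
  have h2 := Real.exp_pos ((A + B) * r₀)
  have h3 : g r₀ ^ 2 + Y r₀ ^ 2 ≤ 0 := by
    by_contra hcon
    have := mul_pos h2 (not_le.1 hcon)
    norm_num at h1
    linarith
  nlinarith [sq_nonneg (g r₀), sq_nonneg (Y r₀)]

/-- If the integral of a radial function over a ball vanishes, then so does its radial integral. -/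
lemma radial_integral_eq_zero (hN : 2 ≤ N) {R : ℝ} (hR : 0 < R) {e : Euc N} (he : ‖e‖ = 1)
    {F : Euc N → ℝ} (hF : ∀ x y, ‖x‖ < R → ‖x‖ = ‖y‖ → F x = F y)
    (hmean : ∫ x in Metric.ball (0 : Euc N) R, F x = 0) :
    ∫ r in (0 : ℝ)..R, r ^ (N - 1) * F (r • e) = 0 := by
  have : Nontrivial (Euc N) := ⟨e, 0, by rintro rfl; simp at he⟩
  have h1 : ∫ x in Metric.ball (0 : Euc N) R, F x =
      ∫ x : Euc N, (Iio R).indicator (fun r => F (r • e)) ‖x‖ := by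
    rw [← integral_indicator Metric.isOpen_ball.measurableSet]
    congr 1
    funext x
    by_cases hx : ‖x‖ < R
    · rw [indicator_of_mem (by simpa using hx), indicator_of_mem (by simpa using hx)]
      exact hF x _ hx (by rw [norm_smul_unit he, abs_norm])
    · rw [indicator_of_notMem (by simpa using hx), indicator_of_notMem (by simpa using hx)]
  rw [hmean, integral_fun_norm_addHaar] at h1
  have h2 : ∫ y in Ioi (0 : ℝ), y ^ (Module.finrank ℝ (Euc N) - 1) •
      (Iio R).indicator (fun r => F (r • e)) y = 0 := by
    have hpos : 0 < (volume : Measure (Euc N)).real (Metric.ball 0 1) :=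
      ENNReal.toReal_pos (Metric.measure_ball_pos _ _ one_pos).ne' measure_ball_lt_top.ne
    have hdim : Module.finrank ℝ (Euc N) ≠ 0 := by simp; omega
    have h3 := h1.symm
    rw [smul_eq_zero] at h3
    rcases h3 with h3 | h3
    · exact absurd h3 hdim
    rw [smul_eq_zero] at h3
    rcases h3 with h3 | h3
    · exact absurd h3 hpos.ne'
    · exact h3
  rw [finrank_euclideanSpace_fin] at h2
  rw [intervalIntegral.integral_of_le hR.le, integral_Ioc_eq_integral_Ioo]
  have h3 : ∀ y : ℝ, y ^ (N - 1) • (Iio R).indicator (fun r => F (r • e)) y =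
      (Iio R).indicator (fun r => r ^ (N - 1) * F (r • e)) y := by
    intro y
    by_cases hy : y ∈ Iio R
    · rw [indicator_of_mem hy, indicator_of_mem hy, smul_eq_mul]
    · rw [indicator_of_notMem hy, indicator_of_notMem hy, smul_zero]
  simp only [h3] at h2
  rw [setIntegral_indicator measurableSet_Iio, Ioi_inter_Iio] at h2
  exact h2

/-- A radial solution of `-Δφ = q φ` which vanishes on the sphere and satisfies `∫ q φ = 0` has
vanishing Cauchy data at `r = R`, hence is zero. -/
lemma radial_eq_zero (hN : 2 ≤ N) {R : ℝ} (hR : 0 < R) {q φ : Euc N → ℝ}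
    (hφc : ContinuousOn φ (Metric.closedBall 0 R)) (hqc : ContinuousOn q (Metric.closedBall 0 R))
    (hφ2 : ∀ x, ‖x‖ < R → ContDiffAt ℝ 2 φ x) (hφb : ∀ x, ‖x‖ = R → φ x = 0)
    (hφr : ∀ x y, ‖x‖ < R → ‖x‖ = ‖y‖ → φ x = φ y)
    (hqr : ∀ x y, ‖x‖ < R → ‖x‖ = ‖y‖ → q x = q y)
    (hφl : ∀ x, ‖x‖ < R → lap φ x = -(q x * φ x))
    (hmean : ∫ x in Metric.ball (0 : Euc N) R, q x * φ x = 0) :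
    ∀ x, ‖x‖ ≤ R → φ x = 0 := by
  obtain ⟨e, he⟩ : ∃ e : Euc N, ‖e‖ = 1 := ⟨EuclideanSpace.single ⟨0, by omega⟩ 1, by simp⟩
  set g : ℝ → ℝ := fun r => φ (r • e) with hg
  have hmaps : MapsTo (fun r : ℝ => r • e) (Icc 0 R) (Metric.closedBall (0 : Euc N) R) := by
    intro r hr
    rw [mem_closedBall_zero_iff, norm_smul_unit he, abs_of_nonneg hr.1]
    exact hr.2
  have hray : ContinuousOn (fun r : ℝ => r • e) (Icc 0 R) := by fun_prop
  have hgc : ContinuousOn g (Icc 0 R) := hφc.comp hray hmaps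
  have hkc : ContinuousOn (fun r : ℝ => q (r • e)) (Icc 0 R) := hqc.comp hray hmaps
  have hIc : ContinuousOn (fun r : ℝ => r ^ (N - 1) * (q (r • e) * φ (r • e))) (Icc 0 R) :=
    (continuous_pow _).continuousOn.mul (hkc.mul hgc)
  have hI0 := radial_integral_eq_zero hN hR he (F := fun x => q x * φ x)
    (fun x y hx hxy => by simp only [hφr x y hx hxy, hqr x y hx hxy]) hmean
  set Y : ℝ → ℝ := fun r => -∫ s in (0 : ℝ)..r, s ^ (N - 1) * (q (s • e) * φ (s • e)) with hY
  have hYc : ContinuousOn Y (Icc 0 R) := by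
    have := intervalIntegral.continuousOn_primitive_interval (μ := volume) (a := 0) (b := R)
      (f := fun r : ℝ => r ^ (N - 1) * (q (r • e) * φ (r • e)))
      (by rw [uIcc_of_le hR.le]; exact hIc.integrableOn_Icc)
    rw [uIcc_of_le hR.le] at this
    exact this.neg
  have hder : ∀ r ∈ Ioo 0 R, HasDerivAt (fun t : ℝ => t ^ (N - 1) * deriv g t)
      (-(r ^ (N - 1) * (q (r • e) * φ (r • e)))) r := by
    intro r hr
    have h1 := hasDerivAt_flux hN he hR hφ2 hφr hr
    rw [hφl _ (by rw [norm_smul_unit he, abs_of_pos hr.1]; exact hr.2)] at h1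
    simpa using h1
  have hYeq : ∀ r ∈ Ico 0 R, Y r = r ^ (N - 1) * deriv g r := by
    intro r hr
    have h1 := intervalIntegral.integral_eq_sub_of_hasDerivAt_of_le
      (f := fun t : ℝ => t ^ (N - 1) * deriv g t)
      (f' := fun r => -(r ^ (N - 1) * (q (r • e) * φ (r • e)))) hr.1 ?_ ?_ ?_
    · rw [intervalIntegral.integral_neg] at h1
      have h2 : N - 1 ≠ 0 := by omega
      simp only [hY]
      rw [h1, zero_pow h2]
      ring
    · intro t ht
      exact (continuousAt_flux he hφ2
        (by rw [abs_of_nonneg ht.1]; exact ht.2.trans_lt hr.2)).continuousWithinAt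
    · exact fun t ht => hder t ⟨ht.1, ht.2.trans hr.2⟩
    · apply ContinuousOn.intervalIntegrable_of_Icc hr.1
      exact hIc.neg.mono (Icc_subset_Icc_right hr.2.le)
  obtain ⟨Q, hQ⟩ := isCompact_Icc.exists_bound_of_continuousOn
    ((continuous_pow (N - 1)).continuousOn.mul hkc : ContinuousOn _ (Icc 0 R))
  have hgR : g R = 0 := hφb _ (by rw [norm_smul_unit he, abs_of_pos hR])
  have hpos : ∀ r ∈ Ioc 0 R, g r = 0 := by
    intro r₀ hr₀
    have hsub : Icc r₀ R ⊆ Icc 0 R := Icc_subset_Icc_left hr₀.1.le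
    have hsub' : Ioo r₀ R ⊆ Ioo 0 R := Ioo_subset_Ioo_left hr₀.1.le
    refine linear_system_eq_zero (a := fun r => (r ^ (N - 1))⁻¹)
      (b := fun r => -(r ^ (N - 1) * q (r • e))) (A := (r₀ ^ (N - 1))⁻¹) (B := Q)
      (hgc.mono hsub) (hYc.mono hsub) ?_ ?_ ?_ ?_ hgR ?_ hr₀.2
    · intro r hr
      have hr' := hsub' hr
      have hp : r ^ (N - 1) ≠ 0 := (pow_pos hr'.1 _).ne'
      rw [hYeq r ⟨hr'.1.le, hr'.2⟩, inv_mul_cancel_left₀ hp]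
      exact ((contDiffAt_ray he hφ2 (by rw [abs_of_pos hr'.1]; exact hr'.2)).differentiableAt
        two_ne_zero).hasDerivAt
    · intro r hr
      have hr' := hsub' hr
      have hev : Y =ᶠ[nhds r] fun t : ℝ => t ^ (N - 1) * deriv g t := by
        filter_upwards [Ioo_mem_nhds hr'.1 hr'.2] with t ht using hYeq t ⟨ht.1.le, ht.2⟩
      refine ((hder r hr').congr_of_eventuallyEq hev).congr_deriv ?_
      simp only [hg]
      ring
    · intro r hr
      have h1 : 0 < r₀ ^ (N - 1) := pow_pos hr₀.1 _
      have h2 : r₀ ^ (N - 1) ≤ r ^ (N - 1) := pow_le_pow_left₀ hr₀.1.le hr.1.le _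
      rw [abs_of_pos (inv_pos.2 (h1.trans_le h2))]
      exact inv_anti₀ h1 h2
    · intro r hr
      rw [abs_neg]
      exact hQ r (Ioo_subset_Icc_self (hsub' hr))
    · simp only [hY]
      rw [hI0, neg_zero]
  have hzero : g 0 = 0 := by
    have h1 : Tendsto g (nhdsWithin 0 (Ioi 0)) (nhds (g 0)) :=
      ((contDiffAt_ray he hφ2 (by simpa using hR)).continuousAt.tendsto).mono_left
        nhdsWithin_le_nhds
    have h2 : Tendsto g (nhdsWithin 0 (Ioi 0)) (nhds 0) := by
      refine tendsto_const_nhds.congr' ?_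
      filter_upwards [Ioc_mem_nhdsGT hR] with t ht using (hpos t ht).symm
    exact tendsto_nhds_unique h1 h2
  intro x hx
  rcases hx.eq_or_lt with h | h
  · exact hφb x h
  have h1 : φ x = g ‖x‖ := hφr x _ h (by rw [norm_smul_unit he, abs_norm])
  rw [h1]
  rcases (norm_nonneg x).eq_or_lt with h2 | h2
  · rw [← h2, hzero]
  · exact hpos _ ⟨h2, hx⟩

end Cauchy

/-! ### Positive solutions on the ball -/

section Solution

variable {N : ℕ}

lemma lap_const (c : ℝ) (x : Euc N) : lap (fun _ => c) x = 0 := by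
  simp [lap]

lemma contDiffAt_power {lam p t : ℝ} (ht : 0 < t) : ContDiffAt ℝ 1 (fun t : ℝ => lam * t ^ p) t :=
  contDiffAt_const.mul (Real.contDiffAt_rpow_const_of_ne ht.ne')

lemma deriv_power {lam p t : ℝ} (ht : 0 < t) :
    deriv (fun t : ℝ => lam * t ^ p) t = lam * p * t ^ (p - 1) := by
  have := ((Real.hasDerivAt_rpow_const (p := p) (Or.inl ht.ne')).const_mul lam).deriv
  rw [this]; ring

/-- The facts about a solution with `α > 0` that the linearized problem relies on: `u = α + λψ` is
at least `α`, bounded, radial, and a classical solution of `-Δu = λ u^p`. -/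
lemma solution_facts (hN : 2 ≤ N) {R : ℝ} (hR : 0 < R) {p lam α : ℝ} (hp : 1 < p) (hlam : 0 < lam)
    (hα : 0 < α) {ψ : Euc N → ℝ} (hsol : SolP (Metric.ball (0 : Euc N) R) p lam α ψ) :
    ContinuousOn (fun x => α + lam * ψ x) (Metric.closedBall 0 R) ∧
    (∀ x, ‖x‖ < R → ContDiffAt ℝ 2 (fun x => α + lam * ψ x) x) ∧
    (∀ x, ‖x‖ ≤ R → α ≤ α + lam * ψ x) ∧
    (∃ U, ∀ x, ‖x‖ ≤ R → α + lam * ψ x ≤ U) ∧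
    (∀ x, ‖x‖ < R → lap (fun x => α + lam * ψ x) x = -(lam * (α + lam * ψ x) ^ p)) ∧
    (∀ x y, ‖x‖ ≤ R → ‖x‖ = ‖y‖ → α + lam * ψ x = α + lam * ψ y) := by
  obtain ⟨hc, h2, hb, hl, -⟩ := hsol
  rw [closure_ball (0 : Euc N) hR.ne'] at hc
  rw [frontier_ball (0 : Euc N) hR.ne'] at hb
  have hψ2 : ∀ x, ‖x‖ < R → ContDiffAt ℝ 2 ψ x := fun x hx =>
    h2.contDiffAt (Metric.isOpen_ball.mem_nhds (by rwa [mem_ball_zero_iff]))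
  have hψb : ∀ x, ‖x‖ = R → ψ x = 0 := fun x hx => hb x (by rwa [mem_sphere_zero_iff_norm])
  have hψl : ∀ x, ‖x‖ < R → -lap ψ x = rho p lam α ψ x := fun x hx =>
    hl x (by rwa [mem_ball_zero_iff])
  have hψ0 : ∀ x, ‖x‖ ≤ R → 0 ≤ ψ x := by
    intro x hx
    have := torsion_lower_bound (by omega) (m := 0) (α := 0) hc hψ2 hψb (fun y hy => by
      have h1 : 0 ≤ rho p lam α ψ y := Real.rpow_nonneg (le_max_right _ _) _
      linarith [hψl y hy]) x hx
    simpa using this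
  have huc : ContinuousOn (fun x => α + lam * ψ x) (Metric.closedBall 0 R) :=
    continuousOn_const.add (continuousOn_const.mul hc)
  have hu2 : ∀ x, ‖x‖ < R → ContDiffAt ℝ 2 (fun x => α + lam * ψ x) x := fun x hx =>
    contDiffAt_const.add (contDiffAt_const.mul (hψ2 x hx))
  have hub : ∀ x, ‖x‖ = R → α + lam * ψ x = α := fun x hx => by simp [hψb x hx]
  have hu0 : ∀ x, ‖x‖ ≤ R → α ≤ α + lam * ψ x := fun x hx => by
    have := mul_nonneg hlam.le (hψ0 x hx)
    linarith
  have hul : ∀ x, ‖x‖ < R → lap (fun x => α + lam * ψ x) x = -(lam * (α + lam * ψ x) ^ p) := by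
    intro x hx
    have h1 := lap_lincomb (contDiffAt_const (c := α)) (hψ2 x hx) 1 lam
    rw [lap_const] at h1
    simp only [one_mul, mul_zero, zero_add] at h1
    have h3 := hψl x hx
    rw [rho, max_eq_left (hα.le.trans (hu0 x hx.le))] at h3
    rw [h1, ← h3]
    ring
  obtain ⟨U, hU⟩ := (isCompact_closedBall (0 : Euc N) R).exists_bound_of_continuousOn huc
  have hU : ∀ x, ‖x‖ ≤ R → α + lam * ψ x ≤ U := fun x hx =>
    (le_abs_self _).trans (hU x (by rwa [mem_closedBall_zero_iff]))
  have hUα : α ≤ U := (hu0 0 (by simpa using hR.le)).trans (hU 0 (by simpa using hR.le))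
  have hUp : 0 < U := hα.trans_le hUα
  refine ⟨huc, hu2, hu0, ⟨U, hU⟩, hul, ?_⟩
  apply radial_of_refl (u := fun x => α + lam * ψ x)
  intro e he
  have hNp : (0 : ℝ) < N := by exact_mod_cast (by omega : 0 < N)
  have hαp : 0 < α ^ p := Real.rpow_pos_of_pos hα _
  refine moving_planes (by omega) hR he (f := fun t => lam * t ^ p) (α := α)
    (K := lam * p * U ^ (p - 1)) (c := lam * α ^ p / (2 * N)) huc hu2 hub (by positivity) ?_ hul ?_
    ?_ ?_
  · refine torsion_lower_bound (by omega) huc hu2 hub ?_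
    intro x hx
    rw [hul x hx]
    have := Real.rpow_le_rpow hα.le (hu0 x hx.le) (by linarith : 0 ≤ p)
    have := mul_le_mul_of_nonneg_left this hlam.le
    linarith
  · intro x y hx hy hxy
    exact mul_le_mul_of_nonneg_left
      (Real.rpow_le_rpow (hα.le.trans (hu0 x hx)) hxy (by linarith)) hlam.le
  · have := Real.rpow_pos_of_pos hUp (p - 1)
    have : 0 < p := by linarith
    positivity
  · intro x y hx hy hxy
    refine Convex.image_sub_le_mul_sub_of_deriv_le (f := fun t : ℝ => lam * t ^ p)
      (convex_Icc α U) ?_ ?_ ?_ _ ⟨hu0 x hx, hU x hx⟩ _ ⟨hu0 y hy, hU y hy⟩ hxy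
    · exact fun t ht => (contDiffAt_power (hα.trans_le ht.1)).continuousAt.continuousWithinAt
    · rw [interior_Icc]
      exact fun t ht => ((contDiffAt_power (hα.trans ht.1)).differentiableAt
        one_ne_zero).differentiableWithinAt
    · rw [interior_Icc]
      intro t ht
      rw [deriv_power (hα.trans ht.1)]
      have h1 : t ^ (p - 1) ≤ U ^ (p - 1) :=
        Real.rpow_le_rpow (hα.trans ht.1).le ht.2.le (by linarith)
      exact mul_le_mul_of_nonneg_left h1 (by have : 0 < p := by linarith
                                             positivity)

/-- The weight `ρ_λ^{1/q}` is continuous up to the boundary. -/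
lemma continuousOn_rhoq {R : ℝ} {p lam α : ℝ} (hp : 1 < p) {ψ : Euc N → ℝ}
    (huc : ContinuousOn (fun x => α + lam * ψ x) (Metric.closedBall 0 R)) :
    ContinuousOn (rhoq p lam α ψ) (Metric.closedBall 0 R) := by
  unfold rhoq
  exact (huc.sup continuousOn_const).rpow_const fun x _ => Or.inr (by linarith)

lemma integrableOn_ball {R : ℝ} {f : Euc N → ℝ} (hf : ContinuousOn f (Metric.closedBall 0 R)) :
    IntegrableOn f (Metric.ball 0 R) :=
  (hf.integrableOn_compact (isCompact_closedBall _ _)).mono_set Metric.ball_subset_closedBall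

/-- The weighted mean of an eigenfunction does not vanish: otherwise the eigenfunction would solve
`-Δφ = λp ρ_λ^{1/q} φ`, hence be radial, hence vanish by its zero Cauchy data on the sphere. -/
lemma eigenfunction_mean_ne_zero (hN : 2 ≤ N) {R : ℝ} (hR : 0 < R) {p lam α : ℝ} (hp : 1 < p)
    (hlam : 0 < lam) (hα : 0 < α) {ψ φ : Euc N → ℝ}
    (hsol : SolP (Metric.ball (0 : Euc N) R) p lam α ψ) (hφ : EigZero R p lam α ψ φ) :
    (∫ x in Metric.ball (0 : Euc N) R, rhoq p lam α ψ x * φ x) ≠ 0 := by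
  intro hmean
  obtain ⟨huc, hu2, hu0, ⟨U, hU⟩, hul, hur⟩ := solution_facts hN hR hp hlam hα hsol
  obtain ⟨hφC, hφb, hφne, hφl⟩ := hφ
  have hφ2 : ∀ x, ‖x‖ < R → ContDiffAt ℝ 2 φ x := fun x hx =>
    hφC.contDiffAt (mem_of_superset (Metric.isOpen_ball.mem_nhds (by rwa [mem_ball_zero_iff]))
      Metric.ball_subset_closedBall)
  have hφb' : ∀ x, ‖x‖ = R → φ x = 0 := fun x hx => hφb x (by rwa [mem_sphere_zero_iff_norm])
  have hupos : ∀ x, ‖x‖ ≤ R → 0 < α + lam * ψ x := fun x hx => hα.trans_le (hu0 x hx)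
  have hp0 : 0 < p := by linarith
  have hρ : ∀ x, ‖x‖ ≤ R → rhoq p lam α ψ x = (α + lam * ψ x) ^ (p - 1) := fun x hx => by
    rw [rhoq, max_eq_left (hupos x hx).le]
  have hdH : ∀ x, ‖x‖ ≤ R → deriv (fun t : ℝ => lam * t ^ p) (α + lam * ψ x) =
      lam * p * rhoq p lam α ψ x := fun x hx => by
    rw [deriv_power (hupos x hx), hρ x hx]
  have hφl' : ∀ x, ‖x‖ < R → lap φ x = -(lam * p * rhoq p lam α ψ x * φ x) := by
    intro x hx
    have h1 := hφl x (by rwa [mem_ball_zero_iff])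
    simp only [brk, avgl, hmean, zero_div, sub_zero] at h1
    linarith
  have hrad := eigenfunction_radial hN hR (u := fun x => α + lam * ψ x) (φ := φ)
    (H := fun t => lam * t ^ p) (m := lam * α ^ p) (M := lam * U ^ p) (Q := lam * p * U ^ (p - 1))
    hu2 (fun x y hx => hur x y hx.le) hul (fun x hx => contDiffAt_power (hupos x hx.le))
    (by have := Real.rpow_pos_of_pos hα p
        positivity)
    (fun x hx => mul_le_mul_of_nonneg_left
      (Real.rpow_le_rpow hα.le (hu0 x hx.le) hp0.le) hlam.le)
    (fun x hx => mul_le_mul_of_nonneg_left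
      (Real.rpow_le_rpow (hupos x hx.le).le (hU x hx.le) hp0.le) hlam.le)
    (fun x hx => by
      rw [deriv_power (hupos x hx.le)]
      have := Real.rpow_pos_of_pos (hupos x hx.le) (p - 1)
      positivity)
    (fun x hx => by
      rw [deriv_power (hupos x hx.le)]
      exact mul_le_mul_of_nonneg_left (Real.rpow_le_rpow (hupos x hx.le).le (hU x hx.le)
        (by linarith)) (by positivity))
    hφC.continuousOn hφ2 hφb' (fun x hx => by rw [hdH x hx.le]; exact hφl' x hx)
  refine hφne fun x hx => ?_
  rw [mem_closedBall_zero_iff] at hx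
  refine radial_eq_zero hN hR (q := fun x => lam * p * rhoq p lam α ψ x) hφC.continuousOn
    (continuousOn_const.mul (continuousOn_rhoq hp huc)) hφ2 hφb' (fun x y hx => hrad x y hx.le)
    (fun x y hx hxy => ?_) hφl' ?_ x hx
  · rw [hρ x hx.le, hρ y (hxy ▸ hx.le), hur x y hx.le hxy]
  · simp only [mul_assoc]
    rw [integral_const_mul, integral_const_mul, hmean]
    simp

end Solution

/-! ### Simplicity of the zero eigenvalue -/

/-- on a ball, for a positive solution `(α,ψ)` of `(P)_λ` with `λ > 0`:
(i) any zero-eigenvalue eigenfunction `φ` of the linearized operator has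
`∫ ρ_λ^{1/q} φ ≠ 0`; (ii) the zero eigenvalue is simple: any two such eigenfunctions
are linearly dependent (on the closed ball). -/
theorem zero_eigenvalue_simple_on_ball
    {N : ℕ} (hN : 2 ≤ N) (R : ℝ) (hR : 0 < R)
    (p : ℝ) (hp : 1 < p) (hpN : 3 ≤ N → p < (N : ℝ) / ((N : ℝ) - 2))
    (lam α : ℝ) (hlam : 0 < lam) (hα : 0 < α)
    (ψ : Euc N → ℝ) (hsol : SolP (Metric.ball (0 : Euc N) R) p lam α ψ) :
    (∀ φ : Euc N → ℝ, EigZero R p lam α ψ φ →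
      (∫ x in Metric.ball (0 : Euc N) R, rhoq p lam α ψ x * φ x) ≠ 0) ∧
    ∀ φ₁ φ₂ : Euc N → ℝ, EigZero R p lam α ψ φ₁ → EigZero R p lam α ψ φ₂ →
      ∃ a b : ℝ, ¬(a = 0 ∧ b = 0) ∧
        ∀ x ∈ Metric.closedBall (0 : Euc N) R, a * φ₁ x + b * φ₂ x = 0 := by
  have hi : ∀ φ : Euc N → ℝ, EigZero R p lam α ψ φ →
      (∫ x in Metric.ball (0 : Euc N) R, rhoq p lam α ψ x * φ x) ≠ 0 := fun φ hφ =>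
    eigenfunction_mean_ne_zero hN hR hp hlam hα hsol hφ
  refine ⟨hi, fun φ₁ φ₂ h₁ h₂ => ?_⟩
  -- the combination of `φ₁` and `φ₂` with vanishing weighted mean is trivial
  set c₁ := ∫ x in Metric.ball (0 : Euc N) R, rhoq p lam α ψ x * φ₁ x with hc₁
  set c₂ := ∫ x in Metric.ball (0 : Euc N) R, rhoq p lam α ψ x * φ₂ x with hc₂
  refine ⟨c₂, -c₁, fun h => hi φ₂ h₂ h.1, ?_⟩
  by_contra hne
  have hρc := continuousOn_rhoq hp (solution_facts hN hR hp hlam hα hsol).1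
  have hmean : ∫ x in Metric.ball (0 : Euc N) R,
      rhoq p lam α ψ x * (c₂ * φ₁ x + -c₁ * φ₂ x) = 0 := by
    have h3 : ∀ x, rhoq p lam α ψ x * (c₂ * φ₁ x + -c₁ * φ₂ x) =
        c₂ * (rhoq p lam α ψ x * φ₁ x) + -c₁ * (rhoq p lam α ψ x * φ₂ x) := fun x => by ring
    simp only [h3]
    have i₁ : IntegrableOn (fun x => rhoq p lam α ψ x * φ₁ x) (Metric.ball 0 R) :=
      integrableOn_ball (hρc.mul h₁.1.continuousOn)
    have i₂ : IntegrableOn (fun x => rhoq p lam α ψ x * φ₂ x) (Metric.ball 0 R) :=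
      integrableOn_ball (hρc.mul h₂.1.continuousOn)
    rw [integral_add (i₁.const_mul _) (i₂.const_mul _), integral_const_mul,
      integral_const_mul, ← hc₁, ← hc₂]
    ring
  refine hi (fun x => c₂ * φ₁ x + -c₁ * φ₂ x) ⟨?_, ?_, hne, ?_⟩ hmean
  · exact (contDiffOn_const.mul h₁.1).add (contDiffOn_const.mul h₂.1)
  · intro x hx
    simp only [h₁.2.1 x hx, h₂.2.1 x hx, mul_zero, add_zero]
  · intro x hx
    have hnhds : Metric.closedBall (0 : Euc N) R ∈ nhds x :=
      mem_of_superset (Metric.isOpen_ball.mem_nhds hx) Metric.ball_subset_closedBall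
    rw [lap_lincomb (h₁.1.contDiffAt hnhds) (h₂.1.contDiffAt hnhds)]
    have e₁ := h₁.2.2.2 x hx
    have e₂ := h₂.2.2.2 x hx
    simp only [brk, avgl, hmean, zero_div, sub_zero, ← hc₁, ← hc₂] at e₁ e₂ ⊢
    linear_combination c₂ * e₁ - c₁ * e₂

end
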